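/- For every z ∈ ℝ, lim_{X→∞} #{D fundamental discriminant : 1 < |D| ≤ X and ω(D) − log log X ≤ z·√(log log X)} / #{D fundamental discriminant : 1 < |D| ≤ X} = (1/√(2π)) ∫_{−∞}^{z} e^{−t²/2} dt. That is, the number of distinct prime divisors of fundamental discriminants D with |D| ≤ X (equivalently, the number of ramified primes in quadratic fields of absolute discriminant at most X) is normally distributed with mean and variance log log X. -/

import Mathlib

/-!
The proof goes through characteristic functions. Write `L = log log X` and `θ = t / √L`.

*All integers.* Let `Y = X ^ (1 / L)` and let `ω_Y` count the prime factors `p ≤ Y`. Expanding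
`e^{iθ ω_Y(n)} = ∏_{p ∣ n, p ≤ Y} (1 + (e^{iθ} - 1))` over sets of primes and summing over `n ≤ X`
gives the Euler product `∏_{p ≤ Y} (1 + (e^{iθ} - 1) / p)`. The rounding errors are bounded by
Rankin's trick with exponent `1 / log Y`, for a total of
`exp (-L + 3 |e^{iθ} - 1| ∑_{p ≤ Y} 1 / p) = o(1)`; no sieve is needed because `θ → 0`
(`norm_mean_sub_prod_le`). The product is close to `exp ((e^{iθ} - 1) ∑_{p ≤ Y} 1 / p)`, and the
primes in `(Y, X]` contribute at most `|θ| ∑_{Y < p ≤ X} 1 / p`. The weak Mertens estimate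
`∑_{p ≤ x} 1 / p = log log x + o(√(log log x))` (`recipSum_sub_loglog_tendsto`), obtained from the
harmonic sum and from `ζ(s)` near `s = 1`, then turns the exponent into `iθL - t² / 2 + o(1)`
(`hasEKDensity_univ`).

*Odd squarefree numbers.* The law is insensitive to replacing `n` by `c n` (`HasEKDensity.dilate`),
so it holds for the odd multiples of `a ^ 2` with their natural density. Summing against `μ(a)`, by
dominated convergence with dominating series `∑ 1 / a ^ 2`, gives the law for odd squarefree numbers
with a positive density `δ` (`hasEKDensity_oddSquarefree`).

*Fundamental discriminants.* Apart from `n = 1`, there is one fundamental discriminant with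
`|D| = n` when `n` is odd squarefree or four times odd squarefree, and there are two when `n` is
eight times odd squarefree (`fundamental_count`). The sum over discriminants is therefore
`δ + δ / 4 + 2 δ / 8` times `X e^{-t² / 2}`, asymptotically. Dividing by the count, which is the case
`t = 0`, and applying Lévy's continuity theorem finishes the proof.
-/

open MeasureTheory Filter

noncomputable section

/-- `D` is a fundamental discriminant: `D ≠ 1` and either `D ≡ 1 (mod 4)` and `D` is
squarefree, or `D = 4m` with `m ≡ 2` or `3 (mod 4)` and `m` squarefree. -/
def IsFundamentalDiscriminant (D : ℤ) : Prop :=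
  D ≠ 1 ∧ ((D % 4 = 1 ∧ Squarefree D) ∨
    (∃ m : ℤ, D = 4 * m ∧ (m % 4 = 2 ∨ m % 4 = 3) ∧ Squarefree m))

/-- The number of distinct primes dividing a nonzero integer. -/
def omegaZ (n : ℤ) : ℕ := n.natAbs.primeFactors.card

/-- The cumulative distribution function of the standard Gaussian. -/
def gaussCDF (z : ℝ) : ℝ :=
  (Real.sqrt (2 * Real.pi))⁻¹ * ∫ t in Set.Iic z, Real.exp (-t ^ 2 / 2)

open scoped Topology

/-! ### A weak form of Mertens' second theorem -/

/-- The primes `p ≤ x`. -/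
def primesUpTo (x : ℝ) : Finset ℕ := (⌊x⌋₊ + 1).primesBelow

/-- The sum of `1 / p` over the primes `p ≤ x`. -/
def recipSum (x : ℝ) : ℝ := ∑ p ∈ primesUpTo x, (p : ℝ)⁻¹

/-- The iterated logarithm `log log x`. -/
def loglog (x : ℝ) : ℝ := Real.log (Real.log x)

/-- The constant `ζ(2) = ∑ 1 / n ^ 2`, which bounds `∑ 1 / p ^ 2`. -/
def zetaTwo : ℝ := ∑' n : ℕ, ((n : ℝ) ^ 2)⁻¹

lemma prime_of_mem_primesUpTo {x : ℝ} {p : ℕ} (h : p ∈ primesUpTo x) : p.Prime :=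
  Nat.prime_of_mem_primesBelow h

lemma mem_primesUpTo {x : ℝ} (hx : 0 ≤ x) {p : ℕ} :
    p ∈ primesUpTo x ↔ (p : ℝ) ≤ x ∧ p.Prime := by
  rw [primesUpTo, Nat.mem_primesBelow, Nat.lt_succ_iff, Nat.le_floor_iff hx]

lemma tendsto_loglog : Tendsto loglog atTop atTop :=
  Real.tendsto_log_atTop.comp Real.tendsto_log_atTop

lemma summable_inv_sq : Summable (fun n : ℕ => ((n : ℝ) ^ 2)⁻¹) :=
  Real.summable_nat_pow_inv.2 one_lt_two

lemma sum_inv_sq_le (s : Finset ℕ) : ∑ p ∈ s, ((p : ℝ) ^ 2)⁻¹ ≤ zetaTwo :=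
  summable_inv_sq.sum_le_tsum s (fun _ _ => by positivity)

lemma recipSum_nonneg (x : ℝ) : 0 ≤ recipSum x :=
  Finset.sum_nonneg fun _ _ => by positivity

/-- Multiplicativity makes `n ↦ n ^ (-σ)` a monoid homomorphism, as Euler products require. -/
def invRpowHom (σ : ℝ) : ℕ →* ℝ where
  toFun n := ((n : ℝ) ^ σ)⁻¹
  map_one' := by simp
  map_mul' m n := by
    push_cast
    rw [Real.mul_rpow (by positivity) (by positivity), mul_inv]

/-- Lower half of Mertens' estimate: `log N ≤ ∑_{n ≤ N} 1 / n ≤ ∏_{p ≤ N} (1 - 1 / p)⁻¹`. -/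
lemma loglog_le_recipSum {x : ℝ} (hx : 3 ≤ x) : loglog x ≤ recipSum x + 2 * zetaTwo := by
  set N : ℕ := ⌊x⌋₊ + 1 with hN
  have hxN : x ≤ N := by
    have := Nat.lt_floor_add_one x
    push_cast [hN]; exact this.le
  have hprime : ∀ {p : ℕ}, p.Prime → ‖invRpowHom 1 p‖ < 1 := by
    intro p hp
    have : (1 : ℝ) < p := by exact_mod_cast hp.one_lt
    simp only [invRpowHom, MonoidHom.coe_mk, OneHom.coe_mk, Real.rpow_one, norm_inv,
      Real.norm_natCast]
    exact inv_lt_one_of_one_lt₀ this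
  obtain ⟨h1, h2⟩ :=
    EulerProduct.summable_and_hasSum_smoothNumbers_prod_primesBelow_geometric hprime N
  have hlog : Real.log N ≤ ∏ p ∈ N.primesBelow, (1 - (p : ℝ)⁻¹)⁻¹ := by
    have hharm : Real.log N ≤ ∑ n ∈ Finset.Icc 1 ⌊x⌋₊, (n : ℝ)⁻¹ := by
      have := log_add_one_le_harmonic ⌊x⌋₊
      rw [harmonic_eq_sum_Icc] at this
      push_cast at this
      simpa [hN] using this
    refine hharm.trans ?_
    have h3 := h2.tsum_eq
    simp only [invRpowHom, MonoidHom.coe_mk, OneHom.coe_mk, Real.rpow_one] at h3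
    rw [← h3]
    have h4 : Summable (fun m : N.smoothNumbers => ((m : ℕ) : ℝ)⁻¹) := by
      simpa [invRpowHom] using h1
    let e : {n // n ∈ Finset.Icc 1 ⌊x⌋₊} → N.smoothNumbers := fun n =>
      ⟨n.1, Nat.mem_smoothNumbers_of_lt (Finset.mem_Icc.1 n.2).1
        (Nat.lt_succ_of_le (Finset.mem_Icc.1 n.2).2)⟩
    have he : Function.Injective e := fun a b hab =>
      Subtype.ext (congrArg (fun m : N.smoothNumbers => (m : ℕ)) hab)
    rw [← Finset.sum_coe_sort]
    have := h4.sum_le_tsum ((Finset.univ : Finset {n // n ∈ Finset.Icc 1 ⌊x⌋₊}).map ⟨e, he⟩)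
      (fun _ _ => by positivity)
    simpa [e] using this
  have hlogx : 1 < Real.log x := by
    rw [Real.lt_log_iff_exp_lt (by linarith)]
    exact Real.exp_one_lt_d9.trans (by linarith)
  have hloglog : loglog x ≤ Real.log (∏ p ∈ N.primesBelow, (1 - (p : ℝ)⁻¹)⁻¹) := by
    refine Real.log_le_log (by linarith) (le_trans ?_ hlog)
    exact Real.log_le_log (by linarith) hxN
  refine hloglog.trans ?_
  have hp2 : ∀ p ∈ N.primesBelow, (2 : ℝ) ≤ p := fun p hp => by
    exact_mod_cast (Nat.prime_of_mem_primesBelow hp).two_le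
  rw [Real.log_prod (fun p hp => by
    have := hp2 p hp
    have : (p : ℝ)⁻¹ < 1 := inv_lt_one_of_one_lt₀ (by linarith)
    exact inv_ne_zero (by linarith))]
  calc ∑ p ∈ N.primesBelow, Real.log (1 - (p : ℝ)⁻¹)⁻¹
      ≤ ∑ p ∈ N.primesBelow, ((p : ℝ)⁻¹ + 2 * ((p : ℝ) ^ 2)⁻¹) := by
        refine Finset.sum_le_sum fun p hp => ?_
        have h := hp2 p hp
        have h' : (0 : ℝ) < p - 1 := by linarith
        have e1 : (1 - (p : ℝ)⁻¹)⁻¹ = p / (p - 1) := by field_simp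
        rw [e1]
        refine (Real.log_le_sub_one_of_pos (by positivity)).trans ?_
        have e2 : (p : ℝ)⁻¹ + 2 * ((p : ℝ) ^ 2)⁻¹ - (p / (p - 1) - 1) =
          (p - 2) / (p ^ 2 * (p - 1)) := by field_simp; ring
        have : 0 ≤ ((p : ℝ) - 2) / (p ^ 2 * (p - 1)) := by
          apply div_nonneg <;> [linarith; positivity]
        linarith
    _ ≤ recipSum x + 2 * zetaTwo := by
        rw [Finset.sum_add_distrib, ← Finset.mul_sum]
        have := sum_inv_sq_le N.primesBelow
        have e : recipSum x = ∑ p ∈ N.primesBelow, (p : ℝ)⁻¹ := rfl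
        rw [e]; linarith

/-- `∑_p p ^ (-σ) ≤ log ζ(σ)`, truncated. -/
lemma sum_inv_rpow_le_log {σ : ℝ} (hσ : 1 < σ) (x : ℝ) :
    ∑ p ∈ primesUpTo x, ((p : ℝ) ^ σ)⁻¹ ≤ Real.log (∑' n : ℕ, 1 / (n : ℝ) ^ σ) := by
  have hs : Summable (invRpowHom σ) := Real.summable_nat_rpow_inv.2 hσ
  have hprod := EulerProduct.prod_primesBelow_geometric_eq_tsum_smoothNumbers hs (⌊x⌋₊ + 1)
  have hlt : ∀ p ∈ primesUpTo x, 0 < ((p : ℝ) ^ σ)⁻¹ ∧ ((p : ℝ) ^ σ)⁻¹ < 1 := fun p hp => by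
    have : (1 : ℝ) < p := by exact_mod_cast (prime_of_mem_primesUpTo hp).one_lt
    have := Real.one_lt_rpow this (by linarith : 0 < σ)
    exact ⟨by positivity, inv_lt_one_of_one_lt₀ this⟩
  have hle : ∏ p ∈ primesUpTo x, (1 - ((p : ℝ) ^ σ)⁻¹)⁻¹ ≤ ∑' n : ℕ, 1 / (n : ℝ) ^ σ := by
    have e1 : ∏ p ∈ primesUpTo x, (1 - ((p : ℝ) ^ σ)⁻¹)⁻¹ =
      ∑' m : (⌊x⌋₊ + 1).smoothNumbers, invRpowHom σ m := hprod
    rw [e1]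
    have := hs.tsum_subtype_le (f := invRpowHom σ) (⌊x⌋₊ + 1).smoothNumbers
      (fun n => by simp only [invRpowHom, MonoidHom.coe_mk, OneHom.coe_mk]; positivity)
    refine this.trans (le_of_eq ?_)
    simp [invRpowHom]
  have hpos : 0 < ∏ p ∈ primesUpTo x, (1 - ((p : ℝ) ^ σ)⁻¹)⁻¹ :=
    Finset.prod_pos fun p hp => inv_pos.2 (by linarith [(hlt p hp).2])
  refine le_trans ?_ (Real.log_le_log hpos hle)
  rw [Real.log_prod (fun p hp => inv_ne_zero (by linarith [(hlt p hp).2]))]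
  refine Finset.sum_le_sum fun p hp => ?_
  rw [Real.log_inv]
  have := Real.log_le_sub_one_of_pos (show 0 < 1 - ((p : ℝ) ^ σ)⁻¹ by linarith [(hlt p hp).2])
  linarith

/-- Upper half of Mertens' estimate, up to `log log log x`: for `p ≤ x`,
`1 / p ≤ x ^ δ / p ^ (1 + δ)`, and `ζ(1 + δ) ≤ 2 / δ`; the choice `δ = 1 / (log x · log log x)`
makes `x ^ δ` close to `1`. -/
lemma recipSum_le_eventually : ∀ᶠ x in atTop,
    recipSum x ≤ Real.exp (1 / loglog x) *
      (Real.log 2 + loglog x + Real.log (loglog x)) := by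
  have hz : ∀ᶠ s in 𝓝[>] (1 : ℝ), (s - 1) * ∑' (n : ℕ), 1 / (n : ℝ) ^ s < 2 :=
    tendsto_sub_mul_tsum_nat_rpow.eventually (gt_mem_nhds one_lt_two)
  have hδ : Tendsto (fun x : ℝ => 1 + (Real.log x * loglog x)⁻¹) atTop (𝓝[>] 1) := by
    have h0 : Tendsto (fun x : ℝ => Real.log x * loglog x) atTop atTop :=
      Real.tendsto_log_atTop.atTop_mul_atTop₀ tendsto_loglog
    refine tendsto_nhdsWithin_iff.2 ⟨?_, ?_⟩
    · simpa using h0.inv_tendsto_atTop.const_add 1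
    · filter_upwards [h0.eventually_gt_atTop 0] with x hx
      exact lt_add_of_pos_right 1 (inv_pos.2 hx)
  filter_upwards [hδ.eventually hz, Real.tendsto_log_atTop.eventually_gt_atTop 0,
    tendsto_loglog.eventually_gt_atTop 0, eventually_gt_atTop 0] with x h1 h2 h3 h4
  set δ : ℝ := (Real.log x * loglog x)⁻¹ with hδd
  have hδpos : 0 < δ := by positivity
  set Z := ∑' (n : ℕ), 1 / (n : ℝ) ^ (1 + δ) with hZ
  have hZ1 : 0 < Z := by
    have hs : Summable (fun n : ℕ => 1 / (n : ℝ) ^ (1 + δ)) :=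
      Real.summable_one_div_nat_rpow.2 (by linarith)
    exact hs.tsum_pos (fun n => by positivity) 1 (by simp)
  have hZ2 : Z ≤ 2 * (Real.log x * loglog x) := by
    have : δ * Z < 2 := by simpa using h1
    have e : Z = (Real.log x * loglog x) * (δ * Z) := by
      rw [hδd]; field_simp
    rw [e, mul_comm 2]
    gcongr
  have hlogZ : Real.log Z ≤ Real.log 2 + loglog x + Real.log (loglog x) := by
    refine (Real.log_le_log hZ1 hZ2).trans (le_of_eq ?_)
    rw [Real.log_mul (by norm_num) (by positivity), Real.log_mul h2.ne' h3.ne', loglog, add_assoc]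
  have hxδ : x ^ δ = Real.exp (1 / loglog x) := by
    rw [Real.rpow_def_of_pos h4, hδd]
    congr 1; field_simp
  calc recipSum x ≤ ∑ p ∈ primesUpTo x, x ^ δ * ((p : ℝ) ^ (1 + δ))⁻¹ := by
        refine Finset.sum_le_sum fun p hp => ?_
        have hp0 : (0 : ℝ) < p := by exact_mod_cast (prime_of_mem_primesUpTo hp).pos
        have hpx := ((mem_primesUpTo h4.le).1 hp).1
        rw [Real.rpow_add hp0, Real.rpow_one, mul_inv, mul_comm, mul_assoc]
        refine le_mul_of_one_le_right (by positivity) ?_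
        rw [inv_mul_eq_div, one_le_div (by positivity)]
        exact Real.rpow_le_rpow hp0.le hpx hδpos.le
    _ = x ^ δ * ∑ p ∈ primesUpTo x, ((p : ℝ) ^ (1 + δ))⁻¹ := by rw [Finset.mul_sum]
    _ ≤ _ := by
        rw [hxδ]
        gcongr
        exact (sum_inv_rpow_le_log (by linarith) x).trans hlogZ

/-- A weak form of Mertens' second theorem, `∑_{p ≤ x} 1 / p = log log x + o(√(log log x))`. -/
lemma recipSum_sub_loglog_tendsto :
    Tendsto (fun x => (recipSum x - loglog x) / √(loglog x)) atTop (𝓝 0) := by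
  have hlogsqrt : Tendsto (fun L : ℝ => Real.log L / √L) atTop (𝓝 0) := by
    have := (isLittleO_log_rpow_atTop (by norm_num : (0 : ℝ) < 1 / 2)).tendsto_div_nhds_zero
    simpa [Real.sqrt_eq_rpow] using this
  have hinvsqrt : Tendsto (fun L : ℝ => (√L)⁻¹) atTop (𝓝 0) :=
    Real.tendsto_sqrt_atTop.inv_tendsto_atTop
  have hlow : Tendsto (fun L : ℝ => -(2 * zetaTwo) * (√L)⁻¹) atTop (𝓝 0) := by
    simpa using hinvsqrt.const_mul (-(2 * zetaTwo))
  have hup : Tendsto (fun L : ℝ => 7 * (√L)⁻¹ + 3 * (Real.log L / √L)) atTop (𝓝 0) := by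
    simpa using (hinvsqrt.const_mul 7).add (hlogsqrt.const_mul 3)
  refine tendsto_of_tendsto_of_tendsto_of_le_of_le' (hlow.comp tendsto_loglog)
    (hup.comp tendsto_loglog) ?_ ?_
  · filter_upwards [eventually_ge_atTop 3, tendsto_loglog.eventually_gt_atTop 0] with x h1 h2
    have := loglog_le_recipSum h1
    have h3 : 0 < √(loglog x) := Real.sqrt_pos.2 h2
    simp only [Function.comp]
    rw [← div_eq_mul_inv]
    gcongr
    linarith
  · filter_upwards [recipSum_le_eventually, tendsto_loglog.eventually_ge_atTop 1] with x h1 h2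
    have h3 : 0 < √(loglog x) := Real.sqrt_pos.2 (by linarith)
    set L := loglog x with hL
    have hl0 : 0 ≤ Real.log L := Real.log_nonneg h2
    have hl1 : Real.log L ≤ L := by linarith [Real.log_le_sub_one_of_pos (by linarith : 0 < L)]
    have hexp : Real.exp (1 / L) ≤ 1 + 2 * (1 / L) := by
      have hb : |1 / L| ≤ 1 := by
        rw [abs_of_pos (by positivity), div_le_one (by linarith)]; exact h2
      have := Real.abs_exp_sub_one_le hb
      rw [abs_of_pos (show 0 < 1 / L by positivity)] at this
      linarith [le_abs_self (Real.exp (1 / L) - 1)]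
    have hlog2 : Real.log 2 < 1 := by linarith [Real.log_two_lt_d9]
    have hlog2' : 0 < Real.log 2 := Real.log_pos one_lt_two
    have : recipSum x - L ≤ 7 + 3 * Real.log L := by
      have h4 : recipSum x ≤ (1 + 2 * (1 / L)) * (1 + L + Real.log L) := by
        refine h1.trans ?_
        gcongr
      have h5 : 1 / L ≤ 1 := by rw [div_le_one (by linarith)]; exact h2
      have h6 : (1 + 2 * (1 / L)) * (1 + L + Real.log L) =
        3 + L + Real.log L + 2 * (1 / L) * (1 + Real.log L) := by
        field_simp; ring
      have h7 : 1 / L * (1 + Real.log L) ≤ 1 * (1 + Real.log L) := by gcongr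
      linarith
    simp only [Function.comp]
    rw [div_le_iff₀ h3]
    have e : (7 * (√L)⁻¹ + 3 * (Real.log L / √L)) * √L = 7 + 3 * Real.log L := by
      field_simp
    rw [e]; exact this

/-! ### Mean values of powers of `ω` -/

/-- Rankin's trick: the error in counting multiples of `d` up to `X` is at most
`min (1 / X) (1 / d) ≤ X ^ (-α) d ^ (α - 1)` after division by `X`. -/
lemma abs_floor_div_sub_inv_le {X α : ℝ} (hX : 0 < X) (hα0 : 0 ≤ α) (hα1 : α ≤ 1) {d : ℕ}
    (hd : 0 < d) :
    |X⁻¹ * ((⌊X⌋₊ / d : ℕ) : ℝ) - (d : ℝ)⁻¹| ≤ X ^ (-α) * (d : ℝ) ^ (α - 1) := by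
  have hd' : (0 : ℝ) < d := by exact_mod_cast hd
  rw [← Nat.floor_div_natCast]
  have h1 : (⌊X / d⌋₊ : ℝ) ≤ X / d := Nat.floor_le (by positivity)
  have h2 : X / d < ⌊X / d⌋₊ + 1 := Nat.lt_floor_add_one _
  have e1 : (d : ℝ)⁻¹ = X⁻¹ * (X / d) := by field_simp
  have h3 : X⁻¹ * (⌊X / d⌋₊ : ℝ) ≤ (d : ℝ)⁻¹ := by rw [e1]; gcongr
  rw [abs_sub_comm, abs_of_nonneg (by linarith)]
  rcases le_total (d : ℝ) X with h | h
  · calc (d : ℝ)⁻¹ - X⁻¹ * (⌊X / d⌋₊ : ℝ) ≤ X⁻¹ := by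
          rw [e1, ← mul_sub]
          exact mul_le_of_le_one_right (by positivity) (by linarith)
      _ = X ^ (-α) * X ^ (α - 1) := by
          rw [← Real.rpow_add hX, ← Real.rpow_neg_one]; congr 1; ring
      _ ≤ X ^ (-α) * (d : ℝ) ^ (α - 1) := by
          gcongr 1
          exact Real.rpow_le_rpow_of_nonpos hd' h (by linarith)
  · calc (d : ℝ)⁻¹ - X⁻¹ * (⌊X / d⌋₊ : ℝ) ≤ (d : ℝ)⁻¹ := by
          have : 0 ≤ X⁻¹ * (⌊X / d⌋₊ : ℝ) := by positivity
          linarith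
      _ = (d : ℝ) ^ (-α) * (d : ℝ) ^ (α - 1) := by
          rw [← Real.rpow_add hd', ← Real.rpow_neg_one]; congr 1; ring
      _ ≤ X ^ (-α) * (d : ℝ) ^ (α - 1) := by
          gcongr 1
          exact Real.rpow_le_rpow_of_nonpos hX h (by linarith)

/-- The number of primes in `P` dividing `n`. -/
def omegaIn (P : Finset ℕ) (n : ℕ) : ℕ := (P.filter (· ∣ n)).card

/-- Expansion of `(1 + w) ^ ω_P(n)` over the sets of primes in `P` that divide `n`. -/
lemma sum_pow_omegaIn (P : Finset ℕ) (hP : ∀ p ∈ P, p.Prime) (w : ℂ) (N : ℕ) :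
    ∑ n ∈ Finset.Ioc 0 N, (1 + w) ^ omegaIn P n =
      ∑ s ∈ P.powerset, w ^ s.card * ((N / ∏ p ∈ s, p : ℕ) : ℂ) := by
  have h1 : ∀ n ∈ Finset.Ioc 0 N, (1 + w) ^ omegaIn P n =
      ∑ s ∈ P.powerset, if (∏ p ∈ s, p) ∣ n then w ^ s.card else 0 := by
    intro n _
    rw [omegaIn, ← Finset.prod_const, Finset.prod_one_add, ← Finset.sum_filter]
    refine Finset.sum_congr ?_ fun s _ => by simp
    ext s
    simp only [Finset.mem_powerset, Finset.mem_filter]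
    constructor
    · intro h
      refine ⟨h.trans (Finset.filter_subset _ _), Finset.prod_primes_dvd n (fun p hp => ?_)
        (fun p hp => (Finset.mem_filter.1 (h hp)).2)⟩
      exact (hP p (Finset.mem_filter.1 (h hp)).1).prime
    · rintro ⟨h, h'⟩ p hp
      exact Finset.mem_filter.2 ⟨h hp, (Finset.dvd_prod_of_mem _ hp).trans h'⟩
  rw [Finset.sum_congr rfl h1, Finset.sum_comm]
  refine Finset.sum_congr rfl fun s _ => ?_
  rw [← Finset.sum_filter, Finset.sum_const, Nat.Ioc_filter_dvd_card_eq_div, nsmul_eq_mul, mul_comm]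

/-- The mean of `(1 + w) ^ ω_Y(n)` over `n ≤ X` is the Euler product over `p ≤ Y`, with an error
controlled by Rankin's trick with exponent `1 / log Y`. -/
lemma norm_mean_sub_prod_le {X Y : ℝ} (hX : 0 < X) (hY : 1 ≤ Real.log Y) (hY0 : 0 < Y) (w : ℂ) :
    ‖(X : ℂ)⁻¹ * ∑ n ∈ Finset.Ioc 0 ⌊X⌋₊, (1 + w) ^ omegaIn (primesUpTo Y) n
        - ∏ p ∈ primesUpTo Y, (1 + w * (p : ℂ)⁻¹)‖
      ≤ Real.exp (-(Real.log X / Real.log Y) + 3 * ‖w‖ * recipSum Y) := by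
  set P := primesUpTo Y with hPdef
  have hP : ∀ p ∈ P, p.Prime := fun p hp => prime_of_mem_primesUpTo hp
  set α : ℝ := (Real.log Y)⁻¹ with hα
  have hα0 : 0 ≤ α := by positivity
  have hα1 : α ≤ 1 := inv_le_one_of_one_le₀ hY
  have e1 : (X : ℂ)⁻¹ * ∑ n ∈ Finset.Ioc 0 ⌊X⌋₊, (1 + w) ^ omegaIn P n
        - ∏ p ∈ P, (1 + w * (p : ℂ)⁻¹) =
      ∑ s ∈ P.powerset, w ^ s.card *
        ((X⁻¹ * ((⌊X⌋₊ / ∏ p ∈ s, p : ℕ) : ℝ) - ((∏ p ∈ s, p : ℕ) : ℝ)⁻¹ : ℝ) : ℂ) := by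
    rw [sum_pow_omegaIn P hP, Finset.prod_one_add, Finset.mul_sum, ← Finset.sum_sub_distrib]
    refine Finset.sum_congr rfl fun s _ => ?_
    rw [Finset.prod_mul_distrib, Finset.prod_const, Finset.prod_inv_distrib]
    push_cast
    ring
  rw [e1]
  have hpow : ∀ p ∈ P, (p : ℝ) ^ (α - 1) ≤ 3 * (p : ℝ)⁻¹ := by
    intro p hp
    have hp0 : (0 : ℝ) < p := by exact_mod_cast (hP p hp).pos
    have hpY := ((mem_primesUpTo hY0.le).1 hp).1
    rw [Real.rpow_sub_one hp0.ne', div_eq_mul_inv]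
    gcongr
    calc (p : ℝ) ^ α ≤ Y ^ α := Real.rpow_le_rpow hp0.le hpY hα0
      _ = Real.exp 1 := by
          rw [Real.rpow_def_of_pos hY0, hα, mul_inv_cancel₀ (by linarith)]
      _ ≤ 3 := by linarith [Real.exp_one_lt_d9]
  calc _ ≤ ∑ s ∈ P.powerset, ‖w‖ ^ s.card * (X ^ (-α) * ∏ p ∈ s, (p : ℝ) ^ (α - 1)) := by
        refine (norm_sum_le _ _).trans (Finset.sum_le_sum fun s hs => ?_)
        rw [norm_mul, norm_pow, Complex.norm_real, Real.norm_eq_abs]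
        gcongr
        refine (abs_floor_div_sub_inv_le hX hα0 hα1 (Finset.prod_pos fun p hp =>
          (hP p (Finset.mem_powerset.1 hs hp)).pos)).trans (le_of_eq ?_)
        push_cast
        rw [Real.finsetProd_rpow _ _ (fun p _ => by positivity)]
    _ = X ^ (-α) * ∏ p ∈ P, (1 + ‖w‖ * (p : ℝ) ^ (α - 1)) := by
        rw [Finset.prod_one_add, Finset.mul_sum]
        refine Finset.sum_congr rfl fun s _ => ?_
        rw [Finset.prod_mul_distrib, Finset.prod_const]
        ring
    _ ≤ X ^ (-α) * ∏ p ∈ P, Real.exp (3 * ‖w‖ * (p : ℝ)⁻¹) := by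
        gcongr with p hp
        have := mul_le_mul_of_nonneg_left (hpow p hp) (norm_nonneg w)
        have h2 := Real.add_one_le_exp (3 * ‖w‖ * (p : ℝ)⁻¹)
        linarith
    _ = _ := by
        rw [← Real.exp_sum, ← Finset.mul_sum, Real.rpow_def_of_pos hX, ← Real.exp_add]
        congr 1
        rw [hα, recipSum]
        ring

lemma norm_prod_sub_prod_le {ι : Type*} (s : Finset ι) (a b : ι → ℂ) (ha : ∀ i ∈ s, ‖a i‖ ≤ 1)
    (hb : ∀ i ∈ s, ‖b i‖ ≤ 1) : ‖∏ i ∈ s, a i - ∏ i ∈ s, b i‖ ≤ ∑ i ∈ s, ‖a i - b i‖ := by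
  classical
  induction s using Finset.induction_on with
  | empty => simp
  | insert i s hi ih =>
    rw [Finset.prod_insert hi, Finset.prod_insert hi, Finset.sum_insert hi]
    have ih' := ih (fun j hj => ha j (Finset.mem_insert_of_mem hj))
      (fun j hj => hb j (Finset.mem_insert_of_mem hj))
    have e : a i * ∏ j ∈ s, a j - b i * ∏ j ∈ s, b j =
      (a i - b i) * ∏ j ∈ s, a j + b i * (∏ j ∈ s, a j - ∏ j ∈ s, b j) := by ring
    rw [e]
    refine (norm_add_le _ _).trans (add_le_add ?_ ?_)
    · rw [norm_mul, norm_prod]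
      refine mul_le_of_le_one_right (norm_nonneg _) (Finset.prod_le_one (fun _ _ => norm_nonneg _)
        fun j hj => ha j (Finset.mem_insert_of_mem hj))
    · rw [norm_mul]
      exact (mul_le_of_le_one_left (norm_nonneg _) (hb i (Finset.mem_insert_self i s))).trans ih'

/-- For `‖z‖ ≤ 1` both factors `1 + (z - 1) / p` and `exp ((z - 1) / p)` lie in the unit disc, so
the products differ by at most the sum of the differences of their factors. -/
lemma norm_prod_sub_exp_le (Y : ℝ) {z : ℂ} (hz : ‖z‖ ≤ 1) :
    ‖∏ p ∈ primesUpTo Y, (1 + (z - 1) * (p : ℂ)⁻¹) - Complex.exp ((z - 1) * recipSum Y)‖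
      ≤ ‖z - 1‖ ^ 2 * zetaTwo := by
  have e : Complex.exp ((z - 1) * recipSum Y) =
      ∏ p ∈ primesUpTo Y, Complex.exp ((z - 1) * (p : ℂ)⁻¹) := by
    rw [← Complex.exp_sum, ← Finset.mul_sum, recipSum]
    push_cast
    rfl
  have hp2 : ∀ p ∈ primesUpTo Y, (2 : ℝ) ≤ p := fun p hp => by
    exact_mod_cast (prime_of_mem_primesUpTo hp).two_le
  have hz2 : ‖z - 1‖ ≤ 2 := (norm_sub_le _ _).trans (by rw [norm_one]; linarith)
  rw [e]
  refine (norm_prod_sub_prod_le _ _ _ ?_ ?_).trans ?_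
  · intro p hp
    have h := hp2 p hp
    have hinv : (p : ℝ)⁻¹ ≤ 1 := inv_le_one_of_one_le₀ (by linarith)
    have e2 : 1 + (z - 1) * (p : ℂ)⁻¹ = ((1 - (p : ℝ)⁻¹ : ℝ) : ℂ) + z * ((p : ℝ)⁻¹ : ℝ) := by
      push_cast; ring
    rw [e2]
    refine (norm_add_le _ _).trans ?_
    rw [norm_mul, Complex.norm_real, Complex.norm_real, Real.norm_of_nonneg (by linarith),
      Real.norm_of_nonneg (by positivity)]
    have := mul_le_mul_of_nonneg_right hz (by positivity : 0 ≤ (p : ℝ)⁻¹)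
    linarith
  · intro p hp
    rw [Complex.norm_exp, Real.exp_le_one_iff]
    have e2 : (z - 1) * (p : ℂ)⁻¹ = (z - 1) * ((p : ℝ)⁻¹ : ℝ) := by push_cast; rfl
    rw [e2, Complex.re_mul_ofReal]
    refine mul_nonpos_of_nonpos_of_nonneg ?_ (by positivity)
    have := (Complex.re_le_norm z).trans hz
    simp only [Complex.sub_re, Complex.one_re]; linarith
  · calc ∑ p ∈ primesUpTo Y, ‖1 + (z - 1) * (p : ℂ)⁻¹ - Complex.exp ((z - 1) * (p : ℂ)⁻¹)‖
        ≤ ∑ p ∈ primesUpTo Y, ‖z - 1‖ ^ 2 * ((p : ℝ) ^ 2)⁻¹ := by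
          refine Finset.sum_le_sum fun p hp => ?_
          have h := hp2 p hp
          have hn : ‖(z - 1) * (p : ℂ)⁻¹‖ = ‖z - 1‖ * (p : ℝ)⁻¹ := by
            rw [norm_mul, norm_inv, Complex.norm_natCast]
          have hu : ‖(z - 1) * (p : ℂ)⁻¹‖ ≤ 1 := by
            rw [hn, mul_inv_le_iff₀ (by linarith)]
            linarith
          have := Complex.norm_exp_sub_one_sub_id_le hu
          rw [norm_sub_rev, ← sub_sub]
          refine this.trans (le_of_eq ?_)
          rw [hn, mul_pow, inv_pow]
      _ ≤ _ := by
          rw [← Finset.mul_sum]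
          gcongr
          exact sum_inv_sq_le _

lemma norm_exp_I_sub_exp_I_le (a b : ℝ) :
    ‖Complex.exp (Complex.I * a) - Complex.exp (Complex.I * b)‖ ≤ |a - b| := by
  have e : Complex.exp (Complex.I * a) - Complex.exp (Complex.I * b) =
      Complex.exp (Complex.I * b) * (Complex.exp (Complex.I * (a - b : ℝ)) - 1) := by
    rw [mul_sub, ← Complex.exp_add, mul_one]
    congr 2; push_cast; ring
  rw [e, norm_mul, Complex.norm_exp_I_mul_ofReal, one_mul]
  exact Real.norm_exp_I_mul_ofReal_sub_one_le

/-- Discarding the primes in `(Y, X]` costs at most the first moment of their number. -/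
lemma norm_mean_sub_mean_le {X Y : ℝ} (hY : 0 ≤ Y) (hYX : Y ≤ X) (hX : 0 < X) (θ : ℝ) :
    ‖(X : ℂ)⁻¹ * ∑ n ∈ Finset.Ioc 0 ⌊X⌋₊, Complex.exp (Complex.I * (θ * n.primeFactors.card : ℝ)) -
      (X : ℂ)⁻¹ * ∑ n ∈ Finset.Ioc 0 ⌊X⌋₊,
        Complex.exp (Complex.I * (θ * omegaIn (primesUpTo Y) n : ℝ))‖
      ≤ |θ| * (recipSum X - recipSum Y) := by
  have hsub : primesUpTo Y ⊆ primesUpTo X := fun p hp => by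
    rw [mem_primesUpTo hY] at hp
    rw [mem_primesUpTo hX.le]
    exact ⟨hp.1.trans hYX, hp.2⟩
  set Q := primesUpTo X \ primesUpTo Y with hQ
  have hω : ∀ n ∈ Finset.Ioc 0 ⌊X⌋₊,
      n.primeFactors.card = omegaIn (primesUpTo Y) n + omegaIn Q n := by
    intro n hn
    rw [Finset.mem_Ioc] at hn
    rw [omegaIn, omegaIn, ← Finset.card_union_of_disjoint
      (Finset.disjoint_filter_filter Finset.disjoint_sdiff), ← Finset.filter_union,
      Finset.union_sdiff_of_subset hsub]
    congr 1
    ext p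
    rw [Nat.mem_primeFactors, Finset.mem_filter, mem_primesUpTo hX.le]
    constructor
    · rintro ⟨h1, h2, -⟩
      exact ⟨⟨(Nat.le_floor_iff hX.le).1 ((Nat.le_of_dvd hn.1 h2).trans hn.2), h1⟩, h2⟩
    · rintro ⟨⟨-, h1⟩, h2⟩
      exact ⟨h1, h2, hn.1.ne'⟩
  have hcount : ∑ n ∈ Finset.Ioc 0 ⌊X⌋₊, (omegaIn Q n : ℝ) ≤ X * (recipSum X - recipSum Y) := by
    have e1 : ∑ n ∈ Finset.Ioc 0 ⌊X⌋₊, (omegaIn Q n : ℝ) =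
        ∑ p ∈ Q, ((⌊X⌋₊ / p : ℕ) : ℝ) := by
      simp_rw [omegaIn, Finset.card_filter]
      push_cast
      rw [Finset.sum_comm]
      refine Finset.sum_congr rfl fun p _ => ?_
      rw [← Nat.Ioc_filter_dvd_card_eq_div, Finset.card_filter]
      push_cast; rfl
    have e2 : recipSum X - recipSum Y = ∑ p ∈ Q, (p : ℝ)⁻¹ := by
      rw [recipSum, recipSum, ← Finset.sum_sdiff hsub, add_sub_cancel_right]
    rw [e1, e2, Finset.mul_sum]
    refine Finset.sum_le_sum fun p _ => ?_
    rw [← Nat.floor_div_natCast, ← div_eq_mul_inv]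
    exact Nat.floor_le (by positivity)
  rw [← mul_sub, ← Finset.sum_sub_distrib, norm_mul, norm_inv, Complex.norm_real,
    Real.norm_of_nonneg hX.le, inv_mul_le_iff₀ hX]
  calc _ ≤ ∑ n ∈ Finset.Ioc 0 ⌊X⌋₊, |θ| * (omegaIn Q n : ℝ) := by
        refine (norm_sum_le _ _).trans (Finset.sum_le_sum fun n hn => ?_)
        refine (norm_exp_I_sub_exp_I_le _ _).trans (le_of_eq ?_)
        rw [hω n hn]
        push_cast
        rw [← mul_sub, add_sub_cancel_left, abs_mul, Nat.abs_cast]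
    _ ≤ _ := by
        rw [← Finset.mul_sum, mul_left_comm]
        gcongr

/-! ### The Erdős–Kac law for the integers -/

/-- The normalised character `exp (i θ (ω(n) - log log X))`. -/
def ekTerm (θ X : ℝ) (n : ℕ) : ℂ :=
  Complex.exp (Complex.I * (θ * (n.primeFactors.card - loglog X) : ℝ))

/-- `X⁻¹` times the sum of the normalised characters over `n ∈ S`, `1 ≤ n ≤ X`. -/
def ekMean (S : Set ℕ) (θ X : ℝ) : ℂ :=
  (X : ℂ)⁻¹ * ∑ n ∈ Finset.Ioc 0 ⌊X⌋₊, S.indicator (ekTerm θ X) n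

/-- `S` has density `δ`, and `ω` restricted to `S` obeys the Erdős–Kac law, expressed through
characteristic functions. The frequency `θ` may be any function of `X` with
`θ √(log log X) → t`, which makes the notion stable under dilations `X ↦ X / c`. -/
def HasEKDensity (S : Set ℕ) (δ : ℝ) : Prop :=
  ∀ (θ : ℝ → ℝ) (t : ℝ), Tendsto (fun X => θ X * √(loglog X)) atTop (𝓝 t) →
    Tendsto (fun X => ekMean S (θ X) X) atTop (𝓝 (δ * Complex.exp (-(t : ℂ) ^ 2 / 2)))

lemma norm_ekTerm (θ X : ℝ) (n : ℕ) : ‖ekTerm θ X n‖ = 1 := Complex.norm_exp_I_mul_ofReal _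

lemma tendsto_zero_of_mul_sqrt {θ : ℝ → ℝ} {t : ℝ}
    (hθ : Tendsto (fun X => θ X * √(loglog X)) atTop (𝓝 t)) : Tendsto θ atTop (𝓝 0) := by
  have h : Tendsto (fun X => (√(loglog X))⁻¹) atTop (𝓝 0) :=
    (Real.tendsto_sqrt_atTop.comp tendsto_loglog).inv_tendsto_atTop
  have := hθ.mul h
  rw [mul_zero] at this
  refine this.congr' ?_
  filter_upwards [tendsto_loglog.eventually_gt_atTop 0] with X hX
  have : √(loglog X) ≠ 0 := (Real.sqrt_pos.2 hX).ne'
  field_simp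

/-- The truncation point `Y = X ^ (1 / log log X)`. -/
def truncPoint (X : ℝ) : ℝ := Real.exp (Real.log X / loglog X)

lemma tendsto_log_truncPoint : Tendsto (fun X => Real.log (truncPoint X)) atTop atTop := by
  have h : Tendsto (fun u : ℝ => u / Real.log u) atTop atTop := by
    have h1 : Tendsto (fun u : ℝ => Real.log u / u) atTop (𝓝[>] 0) := by
      refine tendsto_nhdsWithin_iff.2 ⟨?_, ?_⟩
      · have := Real.isLittleO_log_id_atTop.tendsto_div_nhds_zero
        simpa using this
      · filter_upwards [eventually_gt_atTop 1] with u hu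
        exact div_pos (Real.log_pos hu) (by linarith)
    have := h1.inv_tendsto_nhdsGT_zero
    refine this.congr fun u => ?_
    simp
  have := h.comp Real.tendsto_log_atTop
  refine this.congr fun X => ?_
  simp [truncPoint, loglog]

lemma tendsto_truncPoint : Tendsto truncPoint atTop atTop := by
  have := Real.tendsto_exp_atTop.comp tendsto_log_truncPoint
  refine this.congr fun X => ?_
  simp [truncPoint]

lemma recipSum_truncPoint_tendsto :
    Tendsto (fun X => (recipSum (truncPoint X) - loglog X) / √(loglog X)) atTop (𝓝 0) := by
  have hll : ∀ᶠ X in atTop, loglog (truncPoint X) = loglog X - Real.log (loglog X) := by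
    filter_upwards [tendsto_loglog.eventually_gt_atTop 0,
      Real.tendsto_log_atTop.eventually_gt_atTop 0] with X h1 h2
    conv_lhs => rw [loglog, truncPoint, Real.log_exp, Real.log_div h2.ne' h1.ne']
    rfl
  have h1 : Tendsto (fun X => Real.log (loglog X) / √(loglog X)) atTop (𝓝 0) := by
    have := (isLittleO_log_rpow_atTop (by norm_num : (0 : ℝ) < 1 / 2)).tendsto_div_nhds_zero
    have := this.comp tendsto_loglog
    simpa [Real.sqrt_eq_rpow, Function.comp_def] using this
  have h2 : Tendsto (fun X => (recipSum (truncPoint X) - loglog (truncPoint X)) / √(loglog X))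
      atTop (𝓝 0) := by
    have h3 := (recipSum_sub_loglog_tendsto.comp tendsto_truncPoint).abs
    rw [abs_zero] at h3
    refine squeeze_zero_norm' ?_ h3
    filter_upwards [hll, tendsto_loglog.eventually_ge_atTop 1,
      (tendsto_loglog.comp tendsto_truncPoint).eventually_gt_atTop 0] with X h4 h5 h6
    simp only [Function.comp] at h6 ⊢
    rw [Real.norm_eq_abs, abs_div, abs_div, abs_of_nonneg (Real.sqrt_nonneg _),
      abs_of_nonneg (Real.sqrt_nonneg _)]
    have h7 : 0 < √(loglog (truncPoint X)) := Real.sqrt_pos.2 h6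
    have h8 : loglog (truncPoint X) ≤ loglog X := by
      rw [h4]; linarith [Real.log_nonneg h5]
    gcongr
  have h3 := h2.sub h1
  rw [sub_zero] at h3
  refine h3.congr' ?_
  filter_upwards [hll] with X hX
  rw [hX, ← sub_div]
  congr 1; ring

/-- The exponent of the limiting characteristic function: `(e^{iθ} - 1) M - iθL → -t² / 2`. -/
lemma tendsto_exponent {θ M L : ℝ → ℝ} {t : ℝ} (hθ0 : Tendsto θ atTop (𝓝 0))
    (h1 : Tendsto (fun X => θ X * (M X - L X)) atTop (𝓝 0))
    (h2 : Tendsto (fun X => θ X ^ 2 * M X) atTop (𝓝 (t ^ 2))) :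
    Tendsto (fun X => (Complex.exp (Complex.I * θ X) - 1) * M X - Complex.I * (θ X * L X : ℝ))
      atTop (𝓝 (-(t : ℂ) ^ 2 / 2)) := by
  have h3 : Tendsto (fun X => (Complex.exp (Complex.I * θ X) - 1 - Complex.I * θ X
      + (θ X : ℂ) ^ 2 / 2) * M X) atTop (𝓝 0) := by
    have h4 : Tendsto (fun X => |θ X| * |θ X ^ 2 * M X|) atTop (𝓝 0) := by
      simpa using hθ0.abs.mul h2.abs
    refine squeeze_zero_norm' ?_ h4
    have hsmall : ∀ᶠ X in atTop, |θ X| < 1 := by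
      have := hθ0.abs
      rw [abs_zero] at this
      exact this.eventually (gt_mem_nhds one_pos)
    filter_upwards [hsmall] with X hX
    have hn : ‖Complex.I * (θ X : ℂ)‖ = |θ X| := by simp
    have hb := Complex.exp_bound (x := Complex.I * θ X) (by rw [hn]; exact hX.le)
      (n := 3) (by norm_num)
    simp only [Finset.sum_range_succ, Finset.sum_range_zero, hn] at hb
    norm_num [Nat.factorial, mul_pow] at hb
    rw [norm_mul, Complex.norm_real, Real.norm_eq_abs, abs_mul, ← mul_assoc, abs_pow]
    gcongr
    calc _ = ‖Complex.exp (Complex.I * θ X) - (1 + Complex.I * θ X + -(θ X : ℂ) ^ 2 / 2)‖ := by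
          congr 1; ring
      _ ≤ |θ X| ^ 3 * (2 / 9) := hb
      _ ≤ |θ X| * |θ X| ^ 2 := by
          have : 0 ≤ |θ X| ^ 3 := by positivity
          nlinarith
  have h5 : Tendsto (fun X => Complex.I * ((θ X * (M X - L X) : ℝ) : ℂ)
      - ((θ X ^ 2 * M X : ℝ) : ℂ) / 2) atTop (𝓝 (Complex.I * ((0 : ℝ) : ℂ) - ((t ^ 2 : ℝ) : ℂ) / 2)) :=
    (((Complex.continuous_ofReal.tendsto _).comp h1).const_mul _).sub
      (((Complex.continuous_ofReal.tendsto _).comp h2).div_const 2)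
  have h6 := h3.add h5
  have e : (0 : ℂ) + (Complex.I * ((0 : ℝ) : ℂ) - ((t ^ 2 : ℝ) : ℂ) / 2) = -(t : ℂ) ^ 2 / 2 := by
    push_cast; ring
  rw [e] at h6
  refine h6.congr fun X => ?_
  push_cast; ring

/-- The Erdős–Kac theorem for the positive integers, in characteristic-function form. -/
lemma hasEKDensity_univ : HasEKDensity Set.univ 1 := by
  intro θ t hθ
  have hθ0 := tendsto_zero_of_mul_sqrt hθ
  set M : ℝ → ℝ := fun X => recipSum (truncPoint X) with hM
  have hsq : Tendsto (fun X => (√(loglog X))⁻¹) atTop (𝓝 0) :=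
    (Real.tendsto_sqrt_atTop.comp tendsto_loglog).inv_tendsto_atTop
  have hdiff : ∀ f : ℝ → ℝ, Tendsto (fun X => (f X - loglog X) / √(loglog X)) atTop (𝓝 0) →
      Tendsto (fun X => θ X * (f X - loglog X)) atTop (𝓝 0) := by
    intro f hf
    have := hθ.mul hf
    rw [mul_zero] at this
    refine this.congr' ?_
    filter_upwards [tendsto_loglog.eventually_gt_atTop 0] with X hX
    have : √(loglog X) ≠ 0 := (Real.sqrt_pos.2 hX).ne'
    field_simp
  have hM1 : Tendsto (fun X => θ X * (M X - loglog X)) atTop (𝓝 0) :=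
    hdiff M recipSum_truncPoint_tendsto
  have hX1 := hdiff recipSum recipSum_sub_loglog_tendsto
  have hratio : Tendsto (fun X => M X / loglog X) atTop (𝓝 1) := by
    have := (recipSum_truncPoint_tendsto.mul hsq).add_const 1
    rw [zero_mul, zero_add] at this
    refine this.congr' ?_
    filter_upwards [tendsto_loglog.eventually_gt_atTop 0] with X hX
    have h1 : √(loglog X) ≠ 0 := (Real.sqrt_pos.2 hX).ne'
    have h2 := Real.sq_sqrt hX.le
    field_simp
    rw [h2]; ring
  have hM2 : Tendsto (fun X => θ X ^ 2 * M X) atTop (𝓝 (t ^ 2)) := by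
    have := (hθ.pow 2).mul hratio
    rw [mul_one] at this
    refine this.congr' ?_
    filter_upwards [tendsto_loglog.eventually_gt_atTop 0] with X hX
    rw [mul_pow, Real.sq_sqrt hX.le]
    field_simp
  have hexp := tendsto_exponent hθ0 hM1 hM2
  have hlim := (Complex.continuous_exp.tendsto _).comp hexp
  rw [Complex.ofReal_one, one_mul]
  refine (tendsto_iff_of_dist ?_).1 hlim
  -- The three errors: discarding primes above `Y`, Rankin's bound, and product versus exponential.
  have herr : Tendsto (fun X => |θ X * (recipSum X - loglog X) - θ X * (M X - loglog X)|
      + Real.exp (loglog X * (-1 + 3 * |θ X| * (M X / loglog X)))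
      + |θ X| ^ 2 * zetaTwo) atTop (𝓝 0) := by
    have a1 := (hX1.sub hM1).abs
    have a2 : Tendsto (fun X => Real.exp (loglog X * (-1 + 3 * |θ X| * (M X / loglog X))))
        atTop (𝓝 0) := by
      refine Real.tendsto_exp_atBot.comp ?_
      have : Tendsto (fun X => -1 + 3 * |θ X| * (M X / loglog X)) atTop (𝓝 (-1)) := by
        simpa using ((hθ0.abs.const_mul 3).mul hratio).const_add (-1)
      exact tendsto_loglog.atTop_mul_neg (by norm_num) this
    have a3 := (hθ0.abs.pow 2).mul_const zetaTwo
    simpa using (a1.add a2).add a3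
  refine squeeze_zero' (Eventually.of_forall fun _ => dist_nonneg) ?_ herr
  filter_upwards [tendsto_loglog.eventually_ge_atTop 1, eventually_gt_atTop 1,
    tendsto_log_truncPoint.eventually_ge_atTop 1] with X hL hX hY
  set Y := truncPoint X with hYdef
  set P := primesUpTo Y
  have hX0 : 0 < X := by linarith
  have hY0 : 0 < Y := Real.exp_pos _
  have hlogX : 0 < Real.log X := Real.log_pos hX
  have hlogY : Real.log Y = Real.log X / loglog X := Real.log_exp _
  have hYX : Y ≤ X := by
    rw [← Real.log_le_log_iff hY0 hX0, hlogY]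
    exact div_le_self hlogX.le hL
  set z := Complex.exp (Complex.I * θ X) with hz
  have hz1 : ‖z‖ = 1 := Complex.norm_exp_I_mul_ofReal _
  have hw : ‖z - 1‖ ≤ |θ X| := Real.norm_exp_I_mul_ofReal_sub_one_le
  have hpow : ∀ k : ℕ, Complex.exp (Complex.I * (θ X * k : ℝ)) = (1 + (z - 1)) ^ k := by
    intro k
    rw [add_sub_cancel, hz, ← Complex.exp_nat_mul]
    congr 1; push_cast; ring
  have b1 := norm_mean_sub_mean_le hY0.le hYX hX0 (θ X)
  have b2 := norm_mean_sub_prod_le hX0 hY hY0 (z - 1)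
  have b3 := norm_prod_sub_exp_le Y hz1.le
  simp_rw [hpow] at b1
  set c := Complex.exp (-(Complex.I * (θ X * loglog X : ℝ))) with hc
  have hc1 : ‖c‖ = 1 := by
    have : c = Complex.exp (Complex.I * (-(θ X * loglog X) : ℝ)) := by
      rw [hc]; congr 1; push_cast; ring
    rw [this]; exact Complex.norm_exp_I_mul_ofReal _
  have e1 : ekMean Set.univ (θ X) X = c * ((X : ℂ)⁻¹ *
      ∑ n ∈ Finset.Ioc 0 ⌊X⌋₊, (1 + (z - 1)) ^ n.primeFactors.card) := by
    rw [ekMean, mul_left_comm, Finset.mul_sum _ _ c]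
    congr 1
    refine Finset.sum_congr rfl fun n _ => ?_
    rw [Set.indicator_univ, ← hpow, hc, ← Complex.exp_add, ekTerm]
    congr 1; push_cast; ring
  have e2 : (Complex.exp ∘ fun X => (Complex.exp (Complex.I * θ X) - 1) * M X -
      Complex.I * (θ X * loglog X : ℝ)) X = c * Complex.exp ((z - 1) * recipSum Y) := by
    simp only [Function.comp]
    rw [hc, ← Complex.exp_add]
    congr 1; ring
  rw [dist_comm, dist_eq_norm, e1, e2, ← mul_sub, norm_mul, hc1, one_mul]
  have d1 : |θ X| * (recipSum X - recipSum Y) ≤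
      |θ X * (recipSum X - loglog X) - θ X * (M X - loglog X)| := by
    have : θ X * (recipSum X - loglog X) - θ X * (M X - loglog X) =
      θ X * (recipSum X - recipSum Y) := by ring
    rw [this, abs_mul]
    gcongr
    exact le_abs_self _
  have d2 : Real.exp (-(Real.log X / Real.log Y) + 3 * ‖z - 1‖ * recipSum Y) ≤
      Real.exp (loglog X * (-1 + 3 * |θ X| * (M X / loglog X))) := by
    rw [Real.exp_le_exp]
    have g1 : Real.log X / Real.log Y = loglog X := by
      rw [hlogY]; field_simp
    have g2 : loglog X * (-1 + 3 * |θ X| * (M X / loglog X)) =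
        -loglog X + 3 * |θ X| * recipSum Y := by
      field_simp
      rfl
    rw [g1, g2]
    gcongr
    exact recipSum_nonneg Y
  have d3 : ‖z - 1‖ ^ 2 * zetaTwo ≤ |θ X| ^ 2 * zetaTwo := by
    gcongr
    exact tsum_nonneg fun _ => by positivity
  refine (norm_sub_le_norm_sub_add_norm_sub _ _ _).trans (add_le_add ?_ (b3.trans d3))
  refine (norm_sub_le_norm_sub_add_norm_sub _ _ _).trans (add_le_add (b1.trans d1) (b2.trans d2))

/-! ### Dilations and differences -/

lemma tendsto_loglog_sub_loglog_div {c : ℝ} (hc : 0 < c) :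
    Tendsto (fun X => loglog X - loglog (X / c)) atTop (𝓝 0) := by
  have h1 : Tendsto (fun X : ℝ => 1 - Real.log c / Real.log X) atTop (𝓝 1) := by
    have := (Real.tendsto_log_atTop.inv_tendsto_atTop.const_mul (Real.log c)).const_sub 1
    simpa [div_eq_mul_inv] using this
  have h2 := (Real.continuousAt_log one_ne_zero).tendsto.comp h1
  have h3 := h2.neg
  rw [Real.log_one, neg_zero] at h3
  refine h3.congr' ?_
  filter_upwards [eventually_gt_atTop 0, Real.tendsto_log_atTop.eventually_gt_atTop 0,
    h1.eventually (lt_mem_nhds one_pos)] with X hX hl hpos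
  have e : Real.log (X / c) = Real.log X * (1 - Real.log c / Real.log X) := by
    rw [Real.log_div hX.ne' hc.ne']; field_simp
  simp only [Function.comp, loglog]
  rw [e, Real.log_mul hl.ne' hpos.ne']
  ring

lemma card_primeFactors_mul_sub_le {c m : ℕ} (hc : c ≠ 0) (hm : m ≠ 0) :
    |((c * m).primeFactors.card : ℝ) - m.primeFactors.card| ≤ c.primeFactors.card := by
  rw [Nat.primeFactors_mul hc hm]
  have h1 : (m.primeFactors.card : ℝ) ≤ (c.primeFactors ∪ m.primeFactors).card := by
    exact_mod_cast Finset.card_le_card Finset.subset_union_right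
  have h2 : ((c.primeFactors ∪ m.primeFactors).card : ℝ) ≤
      c.primeFactors.card + m.primeFactors.card := by
    exact_mod_cast Finset.card_union_le _ _
  rw [abs_of_nonneg (by linarith)]
  linarith

lemma ekMean_dilate (S : Set ℕ) {c : ℕ} (hc : 0 < c) (θ X : ℝ) :
    ekMean ((c * ·) '' S) θ X =
      (X : ℂ)⁻¹ * ∑ m ∈ Finset.Ioc 0 ⌊X / c⌋₊, S.indicator (fun m => ekTerm θ X (c * m)) m := by
  have hinj : Function.Injective (c * · : ℕ → ℕ) := fun a b h => Nat.eq_of_mul_eq_mul_left hc h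
  rw [ekMean, Nat.floor_div_natCast]
  congr 1
  symm
  refine Finset.sum_of_injOn (c * ·) hinj.injOn ?_ ?_ ?_
  · intro m hm
    simp only [Finset.coe_Ioc, Set.mem_Ioc] at hm ⊢
    exact ⟨Nat.mul_pos hc hm.1, by
      rw [mul_comm]; exact (Nat.le_div_iff_mul_le hc).1 hm.2⟩
  · intro n hn hn'
    refine Set.indicator_of_notMem ?_ _
    rintro ⟨m, -, rfl⟩
    apply hn'
    simp only [Finset.mem_Ioc] at hn
    refine ⟨m, ?_, rfl⟩
    simp only [Finset.coe_Ioc, Set.mem_Ioc]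
    exact ⟨Nat.pos_of_mul_pos_left hn.1, (Nat.le_div_iff_mul_le hc).2 (by
      rw [mul_comm]; exact hn.2)⟩
  · intro m _
    by_cases h : m ∈ S
    · rw [Set.indicator_of_mem h, Set.indicator_of_mem (Set.mem_image_of_mem _ h)]
    · rw [Set.indicator_of_notMem h, Set.indicator_of_notMem]
      rintro ⟨k, hk, hkm⟩
      exact h (hinj hkm ▸ hk)

/-- Dilation changes `ω` by `O(1)` and `log log X` by `o(1)`, neither of which is visible on the
scale `√(log log X)`. -/
lemma HasEKDensity.dilate {S : Set ℕ} {δ : ℝ} (hS : HasEKDensity S δ) {c : ℕ} (hc : 0 < c) :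
    HasEKDensity ((c * ·) '' S) (δ / c) := by
  intro θ t hθ
  have hc' : (0 : ℝ) < c := by exact_mod_cast hc
  have hθ0 := tendsto_zero_of_mul_sqrt hθ
  have hΔ := tendsto_loglog_sub_loglog_div hc'
  have hdiv : Tendsto (fun X : ℝ => X / c) atTop atTop := tendsto_id.atTop_div_const hc'
  have hmul : Tendsto (fun X : ℝ => c * X) atTop atTop := tendsto_id.const_mul_atTop hc'
  have hratio : Tendsto (fun X => √(loglog (X / c) / loglog X)) atTop (𝓝 1) := by
    have := (hΔ.mul tendsto_loglog.inv_tendsto_atTop).const_sub 1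
    rw [mul_zero, sub_zero] at this
    have h2 := (Real.continuous_sqrt.tendsto 1).comp this
    rw [Real.sqrt_one] at h2
    refine h2.congr' ?_
    filter_upwards [tendsto_loglog.eventually_gt_atTop 0] with X hX
    simp only [Function.comp, Pi.inv_apply]
    congr 1
    field_simp
    ring
  have h1 : Tendsto (fun X => θ X * √(loglog (X / c))) atTop (𝓝 t) := by
    have := hθ.mul hratio
    rw [mul_one] at this
    refine this.congr' ?_
    filter_upwards [tendsto_loglog.eventually_gt_atTop 0] with X hX
    have h2 : √(loglog X) ≠ 0 := (Real.sqrt_pos.2 hX).ne'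
    rw [Real.sqrt_div' _ hX.le]
    field_simp
  have h2 : Tendsto (fun X => θ (c * X) * √(loglog X)) atTop (𝓝 t) := by
    refine (h1.comp hmul).congr fun X => ?_
    simp only [Function.comp]
    rw [mul_div_cancel_left₀ _ hc'.ne']
  have h3 := ((hS (fun X => θ (c * X)) t h2).comp hdiv).const_mul ((c : ℂ)⁻¹)
  have e0 : ((δ / c : ℝ) : ℂ) * Complex.exp (-(t : ℂ) ^ 2 / 2) =
      (c : ℂ)⁻¹ * (δ * Complex.exp (-(t : ℂ) ^ 2 / 2)) := by
    push_cast; ring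
  rw [e0]
  refine (tendsto_iff_of_dist ?_).1 h3
  have herr : Tendsto (fun X => |θ X| * (c.primeFactors.card + |loglog X - loglog (X / c)|))
      atTop (𝓝 0) := by
    simpa using hθ0.abs.mul (hΔ.abs.const_add (c.primeFactors.card : ℝ))
  refine squeeze_zero' (Eventually.of_forall fun _ => dist_nonneg) ?_ herr
  filter_upwards [eventually_gt_atTop 0] with X hX
  simp only [Function.comp]
  rw [mul_div_cancel₀ X hc'.ne', ekMean_dilate S hc, dist_comm, dist_eq_norm]
  have e1 : (c : ℂ)⁻¹ * ekMean S (θ X) (X / c) =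
      (X : ℂ)⁻¹ * ∑ m ∈ Finset.Ioc 0 ⌊X / c⌋₊, S.indicator (ekTerm (θ X) (X / c)) m := by
    rw [ekMean, ← mul_assoc]
    congr 1
    have : (c : ℂ) ≠ 0 := by exact_mod_cast hc.ne'
    push_cast
    field_simp
  rw [e1, ← mul_sub, ← Finset.sum_sub_distrib, norm_mul, norm_inv, Complex.norm_real,
    Real.norm_of_nonneg hX.le, inv_mul_le_iff₀ hX]
  set B := |θ X| * (c.primeFactors.card + |loglog X - loglog (X / c)|) with hB
  have hB0 : 0 ≤ B := by positivity
  calc _ ≤ ∑ m ∈ Finset.Ioc 0 ⌊X / c⌋₊, B := by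
        refine (norm_sum_le _ _).trans (Finset.sum_le_sum fun m hm => ?_)
        by_cases h : m ∈ S
        · rw [Set.indicator_of_mem h, Set.indicator_of_mem h, ekTerm, ekTerm]
          refine (norm_exp_I_sub_exp_I_le _ _).trans ?_
          rw [← mul_sub, abs_mul, hB]
          gcongr
          have hm0 : m ≠ 0 := (Finset.mem_Ioc.1 hm).1.ne'
          have e2 : ((c * m).primeFactors.card - loglog X : ℝ) -
              (m.primeFactors.card - loglog (X / c)) =
            ((c * m).primeFactors.card - m.primeFactors.card) - (loglog X - loglog (X / c)) := by
            ring
          rw [e2]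
          exact (abs_sub _ _).trans (by gcongr; exact card_primeFactors_mul_sub_le hc.ne' hm0)
        · rw [Set.indicator_of_notMem h, Set.indicator_of_notMem h]
          simpa using hB0
    _ ≤ X * B := by
        rw [Finset.sum_const, Nat.card_Ioc, nsmul_eq_mul]
        gcongr
        refine (Nat.floor_le (by positivity)).trans (div_le_self hX.le ?_)
        exact_mod_cast hc

lemma HasEKDensity.diff {S T : Set ℕ} {δ ε : ℝ} (hS : HasEKDensity S δ) (hT : HasEKDensity T ε)
    (hTS : T ⊆ S) : HasEKDensity (S \ T) (δ - ε) := by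
  intro θ t hθ
  have h := (hS θ t hθ).sub (hT θ t hθ)
  rw [← sub_mul, ← Complex.ofReal_sub] at h
  refine h.congr fun X => ?_
  simp only [ekMean]
  rw [← mul_sub, ← Finset.sum_sub_distrib, Set.indicator_sdiff hTS]
  rfl

lemma hasEKDensity_empty : HasEKDensity ∅ 0 := by
  intro θ t _
  simp [ekMean]

/-! ### Odd squarefree numbers -/

/-- The odd multiples of `a ^ 2`. -/
def oddMultiples (a : ℕ) : Set ℕ := {n | a ^ 2 ∣ n ∧ Odd n}

/-- The density of `oddMultiples a`. -/
def oddDensity (a : ℕ) : ℝ := if Odd a then ((a : ℝ) ^ 2)⁻¹ / 2 else 0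

lemma hasEKDensity_oddMultiples (a : ℕ) : HasEKDensity (oddMultiples a) (oddDensity a) := by
  rw [oddDensity]
  split_ifs with h
  · have ha : 0 < a := h.pos
    have h1 := hasEKDensity_univ.dilate (c := a ^ 2) (by positivity)
    have h2 := hasEKDensity_univ.dilate (c := 2 * a ^ 2) (by positivity)
    have h3 := h1.diff h2 (by
      rintro _ ⟨m, -, rfl⟩
      exact ⟨2 * m, trivial, by ring⟩)
    convert h3 using 1
    · ext n
      simp only [oddMultiples, Set.mem_ofPred_eq, Set.mem_sdiff, Set.image_univ, Set.mem_range]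
      constructor
      · rintro ⟨⟨m, rfl⟩, hodd⟩
        refine ⟨⟨m, rfl⟩, ?_⟩
        rintro ⟨k, hk⟩
        rw [← hk] at hodd
        exact absurd hodd (by rw [Nat.not_odd_iff_even, mul_assoc]; exact even_two_mul _)
      · rintro ⟨⟨m, rfl⟩, hn⟩
        refine ⟨Dvd.intro _ rfl, ?_⟩
        by_contra hodd
        rw [Nat.not_odd_iff_even, Nat.even_mul] at hodd
        rcases hodd with h' | h'
        · exact Nat.not_even_iff_odd.2 (h.pow) h'
        · obtain ⟨k, rfl⟩ := h'
          exact hn ⟨k, by ring⟩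
    · have : (a : ℝ) ≠ 0 := by exact_mod_cast ha.ne'
      push_cast
      field_simp
      norm_num
  · have : oddMultiples a = ∅ := by
      ext n
      simp only [oddMultiples, Set.mem_ofPred_eq, Set.mem_empty_iff_false, iff_false, not_and]
      intro hd hodd
      exact h (Odd.of_dvd_nat hodd ((dvd_pow_self a two_ne_zero).trans hd))
    rw [this]
    exact hasEKDensity_empty

/-- The odd squarefree numbers. -/
def oddSquarefree : Set ℕ := {n | Odd n ∧ Squarefree n}

/-- `∑_{a² ∣ n} μ(a)` detects squarefree `n`. -/
lemma sum_moebius_sq_dvd {n N : ℕ} (hn : 0 < n) (hN : n ≤ N) :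
    ∑ a ∈ Finset.range (N + 1) with a ^ 2 ∣ n, ArithmeticFunction.moebius a =
      if Squarefree n then 1 else 0 := by
  obtain ⟨s, b, hsb, hs⟩ := Nat.sq_mul_squarefree n
  have hb0 : b ≠ 0 := by rintro rfl; simp at hsb; omega
  have hs0 : s ≠ 0 := hs.ne_zero
  have hiff : ∀ a, a ^ 2 ∣ n ↔ a ∣ b := by
    intro a
    constructor
    · intro h
      have ha0 : a ≠ 0 := by rintro rfl; simp at h; omega
      rw [← Nat.factorization_le_iff_dvd (by positivity) hn.ne', ← hsb,
        Nat.factorization_mul (by positivity) hs0] at h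
      rw [← Nat.factorization_le_iff_dvd ha0 hb0]
      intro p
      have h1 := h p
      have h2 := hs.natFactorization_le_one p
      simp only [Nat.factorization_pow, Finsupp.coe_add, Finsupp.coe_smul, Pi.add_apply,
        Pi.smul_apply, smul_eq_mul] at h1
      omega
    · intro h
      rw [← hsb]
      exact (pow_dvd_pow_of_dvd h 2).mul_right s
  have hset : (Finset.range (N + 1)).filter (fun a => a ^ 2 ∣ n) = b.divisors := by
    ext a
    rw [Finset.mem_filter, hiff, Nat.mem_divisors, Finset.mem_range]
    constructor
    · exact fun h => ⟨h.2, hb0⟩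
    · rintro ⟨h, -⟩
      refine ⟨?_, h⟩
      have : a ≤ b := Nat.le_of_dvd (Nat.pos_of_ne_zero hb0) h
      have : b ∣ n := by rw [← hsb]; exact (dvd_pow_self b two_ne_zero).mul_right s
      have := Nat.le_of_dvd hn this
      omega
  rw [hset, ← ArithmeticFunction.coe_zeta_mul_apply, ArithmeticFunction.coe_zeta_mul_moebius,
    ArithmeticFunction.one_apply]
  have : Squarefree n ↔ b = 1 := by
    constructor
    · intro h
      have := h b (by rw [← hsb, sq]; exact Dvd.intro _ rfl)
      exact Nat.isUnit_iff.1 this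
    · rintro rfl
      rw [← hsb]; simpa using hs
  simp [this]

/-- The density of the odd squarefree numbers, as a Möbius sum. -/
def oddSquarefreeDensity : ℝ := ∑' a : ℕ, (ArithmeticFunction.moebius a : ℝ) * oddDensity a

lemma abs_moebius_cast_le (a : ℕ) : |(ArithmeticFunction.moebius a : ℝ)| ≤ 1 := by
  exact_mod_cast (ArithmeticFunction.abs_moebius_le_one (n := a))

lemma oddDensity_bounds (a : ℕ) : 0 ≤ oddDensity a ∧ oddDensity a ≤ ((a : ℝ) ^ 2)⁻¹ / 2 := by
  rw [oddDensity]
  split_ifs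
  · exact ⟨by positivity, le_rfl⟩
  · exact ⟨le_rfl, by positivity⟩

lemma abs_moebius_mul_oddDensity_le (a : ℕ) :
    |(ArithmeticFunction.moebius a : ℝ) * oddDensity a| ≤ ((a : ℝ) ^ 2)⁻¹ / 2 := by
  obtain ⟨h0, h1⟩ := oddDensity_bounds a
  rw [abs_mul, abs_of_nonneg h0]
  exact (mul_le_of_le_one_left h0 (abs_moebius_cast_le a)).trans h1

/-- The `a = 1` term of the Möbius sum dominates, because `ζ(2) < 2`. -/
lemma oddSquarefreeDensity_pos : 0 < oddSquarefreeDensity := by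
  have hs2 : Summable (fun a : ℕ => ((a : ℝ) ^ 2)⁻¹ / 2) := summable_inv_sq.div_const 2
  have hs1 : Summable (fun a : ℕ => (ArithmeticFunction.moebius a : ℝ) * oddDensity a) :=
    Summable.of_norm_bounded hs2 abs_moebius_mul_oddDensity_le
  have h1 := (hs1.add hs2).le_tsum 1 (fun a _ => by
    have := neg_abs_le ((ArithmeticFunction.moebius a : ℝ) * oddDensity a)
    have := abs_moebius_mul_oddDensity_le a
    linarith)
  rw [hs1.tsum_add hs2, tsum_div_const] at h1
  have hz : ∑' a : ℕ, ((a : ℝ) ^ 2)⁻¹ < 2 := by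
    have := hasSum_zeta_two.tsum_eq
    simp only [one_div] at this
    rw [this]
    nlinarith [Real.pi_lt_d2, Real.pi_pos]
  have e : (ArithmeticFunction.moebius 1 : ℝ) * oddDensity 1 + (((1 : ℕ) : ℝ) ^ 2)⁻¹ / 2 = 1 := by
    simp [oddDensity]; norm_num
  rw [e] at h1
  rw [oddSquarefreeDensity]
  linarith

lemma norm_ekMean_oddMultiples_le (a : ℕ) (θ : ℝ) {X : ℝ} (hX : 0 < X) :
    ‖ekMean (oddMultiples a) θ X‖ ≤ ((a : ℝ) ^ 2)⁻¹ := by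
  rw [ekMean, norm_mul, norm_inv, Complex.norm_real, Real.norm_of_nonneg hX.le,
    inv_mul_le_iff₀ hX]
  calc _ ≤ ∑ n ∈ Finset.Ioc 0 ⌊X⌋₊, if a ^ 2 ∣ n then (1 : ℝ) else 0 := by
        refine (norm_sum_le _ _).trans (Finset.sum_le_sum fun n _ => ?_)
        by_cases h : n ∈ oddMultiples a
        · rw [Set.indicator_of_mem h, norm_ekTerm, if_pos h.1]
        · rw [Set.indicator_of_notMem h, norm_zero]
          split_ifs <;> norm_num
    _ = ((⌊X⌋₊ / a ^ 2 : ℕ) : ℝ) := by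
        rw [← Nat.Ioc_filter_dvd_card_eq_div, Finset.card_filter]
        push_cast; rfl
    _ ≤ X * ((a : ℝ) ^ 2)⁻¹ := by
        rw [← Nat.floor_div_natCast, ← div_eq_mul_inv]
        refine (Nat.floor_le (by positivity)).trans (le_of_eq ?_)
        push_cast; rfl

lemma ekMean_oddSquarefree (θ X : ℝ) :
    ekMean oddSquarefree θ X =
      ∑' a : ℕ, (ArithmeticFunction.moebius a : ℂ) * ekMean (oddMultiples a) θ X := by
  rw [tsum_eq_sum (s := Finset.range (⌊X⌋₊ + 1))]
  · simp only [ekMean]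
    simp_rw [mul_left_comm _ (X : ℂ)⁻¹]
    rw [← Finset.mul_sum]
    congr 1
    simp_rw [Finset.mul_sum]
    rw [Finset.sum_comm]
    refine Finset.sum_congr rfl fun n hn => ?_
    rw [Finset.mem_Ioc] at hn
    have hμ := sum_moebius_sq_dvd hn.1 hn.2
    by_cases hodd : Odd n
    · have e1 : ∀ a ∈ Finset.range (⌊X⌋₊ + 1), (ArithmeticFunction.moebius a : ℂ) *
          (oddMultiples a).indicator (ekTerm θ X) n =
          if a ^ 2 ∣ n then (ArithmeticFunction.moebius a : ℂ) * ekTerm θ X n else 0 := by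
        intro a _
        simp [Set.indicator_apply, oddMultiples, hodd]
      rw [Finset.sum_congr rfl e1, ← Finset.sum_filter, ← Finset.sum_mul, ← Int.cast_sum, hμ]
      simp [Set.indicator_apply, oddSquarefree, hodd]
    · simp [oddMultiples, oddSquarefree, hodd]
  · intro a ha
    rw [Finset.mem_range, not_lt] at ha
    have : ekMean (oddMultiples a) θ X = 0 := by
      rw [ekMean, Finset.sum_eq_zero, mul_zero]
      intro n hn
      rw [Finset.mem_Ioc] at hn
      refine Set.indicator_of_notMem ?_ _
      rintro ⟨h, -⟩
      have h1 := Nat.le_of_dvd hn.1 h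
      have h2 : a ≤ a ^ 2 := Nat.le_self_pow two_ne_zero a
      omega
    rw [this, mul_zero]

/-- Dominated convergence in the Möbius sum passes the Erdős–Kac law from multiples of `a ^ 2` to
squarefree numbers. -/
lemma hasEKDensity_oddSquarefree : HasEKDensity oddSquarefree oddSquarefreeDensity := by
  intro θ t hθ
  have hlim : (oddSquarefreeDensity : ℂ) * Complex.exp (-(t : ℂ) ^ 2 / 2) =
      ∑' a : ℕ, (ArithmeticFunction.moebius a : ℂ) *
        (oddDensity a * Complex.exp (-(t : ℂ) ^ 2 / 2)) := by
    rw [oddSquarefreeDensity, Complex.ofReal_tsum, ← tsum_mul_right]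
    refine tsum_congr fun a => ?_
    push_cast; ring
  simp_rw [ekMean_oddSquarefree]
  rw [hlim]
  refine tendsto_tsum_of_dominated_convergence summable_inv_sq
    (fun a => (hasEKDensity_oddMultiples a θ t hθ).const_mul _) ?_
  filter_upwards [eventually_gt_atTop 0] with X hX a
  rw [norm_mul]
  have h1 : ‖(ArithmeticFunction.moebius a : ℂ)‖ ≤ 1 := by
    rw [Complex.norm_intCast]; exact_mod_cast abs_moebius_cast_le a
  exact (mul_le_of_le_one_left (norm_nonneg _) h1).trans (norm_ekMean_oddMultiples_le a _ hX)

/-! ### Fundamental discriminants -/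

lemma isFundamentalDiscriminant_four_mul (m : ℤ) :
    IsFundamentalDiscriminant (4 * m) ↔ (m % 4 = 2 ∨ m % 4 = 3) ∧ Squarefree m := by
  constructor
  · rintro ⟨-, ⟨h, -⟩ | ⟨k, hk, h⟩⟩
    · omega
    · obtain rfl : m = k := by omega
      exact h
  · exact fun h => ⟨by omega, Or.inr ⟨m, rfl, h⟩⟩

lemma isFundamentalDiscriminant_of_not_dvd {D : ℤ} (hD : ¬ (4 : ℤ) ∣ D) :
    IsFundamentalDiscriminant D ↔ D ≠ 1 ∧ D % 4 = 1 ∧ Squarefree D := by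
  constructor
  · rintro ⟨h1, h | ⟨m, rfl, -⟩⟩
    · exact ⟨h1, h⟩
    · exact absurd (Dvd.intro _ rfl) hD
  · exact fun h => ⟨h.1, Or.inl h.2⟩

lemma squarefree_neg_natCast (n : ℕ) : Squarefree (-(n : ℤ)) ↔ Squarefree n := by
  rw [← Int.squarefree_natAbs, Int.natAbs_neg, Int.natAbs_natCast]

lemma squarefree_two_mul_iff (k : ℕ) : Squarefree (2 * k) ↔ Odd k ∧ Squarefree k := by
  rw [Nat.squarefree_mul_iff, Nat.coprime_two_left]
  exact ⟨fun h => ⟨h.1, h.2.2⟩, fun h => ⟨h.1, Nat.prime_two.prime.squarefree, h.2⟩⟩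

open Classical in
/-- The number of fundamental discriminants of absolute value `n` is `1` for `n > 1` odd squarefree
or four times odd squarefree, `2` for `n` eight times odd squarefree, and `0` otherwise; `n = 1`
requires a correction because `D = 1` is excluded. -/
lemma fundamental_count {n : ℕ} (hn : 0 < n) :
    ((if IsFundamentalDiscriminant n then 1 else 0) +
      (if IsFundamentalDiscriminant (-n) then 1 else 0) + (if n = 1 then 1 else 0) : ℕ) =
    (if n ∈ oddSquarefree then 1 else 0) + (if n ∈ (4 * ·) '' oddSquarefree then 1 else 0) +
      2 * (if n ∈ (8 * ·) '' oddSquarefree then 1 else 0) := by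
  by_cases h4 : 4 ∣ n
  · obtain ⟨m, rfl⟩ := h4
    have e1 := isFundamentalDiscriminant_four_mul (m : ℤ)
    have e2 := isFundamentalDiscriminant_four_mul (-m : ℤ)
    rw [squarefree_neg_natCast] at e2
    rw [Int.squarefree_natCast] at e1
    have h1 : 4 * m ≠ 1 := by omega
    have h2 : 4 * m ∉ oddSquarefree := fun h => by
      obtain ⟨k, hk⟩ := h.1
      omega
    have h3 : 4 * m ∈ (4 * ·) '' oddSquarefree ↔ Odd m ∧ Squarefree m := by
      constructor
      · rintro ⟨k, hk, hkm⟩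
        obtain rfl : k = m := by simp only at hkm; omega
        exact hk
      · exact fun h => ⟨m, h, rfl⟩
    have h4 : 4 * m ∈ (8 * ·) '' oddSquarefree ↔ Even m ∧ Squarefree m := by
      constructor
      · rintro ⟨k, hk, hkm⟩
        obtain rfl : m = 2 * k := by simp only at hkm; omega
        exact ⟨even_two_mul k, (squarefree_two_mul_iff k).2 hk⟩
      · rintro ⟨⟨k, rfl⟩, h⟩
        rw [← two_mul] at h
        exact ⟨k, (squarefree_two_mul_iff k).1 h, by ring⟩
    push_cast
    rw [← mul_neg]
    simp only [e1, e2, h1, h2, h3, h4]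
    by_cases hs : Squarefree m
    · have h5 : m % 4 ≠ 0 := by
        intro h
        obtain ⟨k, rfl⟩ := Nat.dvd_of_mod_eq_zero h
        have := hs 2 ⟨k, by ring⟩
        simp at this
      simp only [hs, and_true, Nat.odd_iff, Nat.even_iff]
      have : m % 4 = 1 ∨ m % 4 = 2 ∨ m % 4 = 3 := by omega
      split_ifs <;> omega
    · simp [hs]
  · have h2 : n ∉ (4 * ·) '' oddSquarefree := by
      rintro ⟨k, -, rfl⟩
      exact h4 (Dvd.intro _ rfl)
    have h3 : n ∉ (8 * ·) '' oddSquarefree := by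
      rintro ⟨k, -, rfl⟩
      exact h4 ⟨2 * k, by ring⟩
    rw [isFundamentalDiscriminant_of_not_dvd (by omega),
      isFundamentalDiscriminant_of_not_dvd (by omega), squarefree_neg_natCast,
      Int.squarefree_natCast]
    have h5 : n ∈ oddSquarefree ↔ Odd n ∧ Squarefree n := Iff.rfl
    rw [if_neg h2, if_neg h3]
    simp only [h5]
    by_cases h1 : n = 1
    · subst h1
      simp
    by_cases hs : Squarefree n
    · simp only [hs, and_true, Nat.odd_iff]
      split_ifs <;> omega
    · simp [hs, h1]

open Classical in
/-- The fundamental discriminants `D` with `|D| ≤ N`. -/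
def fundDisc (N : ℕ) : Finset ℤ := (Finset.Icc (-N : ℤ) N).filter IsFundamentalDiscriminant

open Classical in
lemma mem_fundDisc {N : ℕ} {D : ℤ} :
    D ∈ fundDisc N ↔ D.natAbs ≤ N ∧ IsFundamentalDiscriminant D := by
  rw [fundDisc, Finset.mem_filter, Finset.mem_Icc]
  refine and_congr_left fun _ => ?_
  omega

lemma IsFundamentalDiscriminant.one_lt_abs {D : ℤ} (h : IsFundamentalDiscriminant D) :
    1 < |D| := by
  by_contra! hD
  have : D = 0 ∨ D = 1 ∨ D = -1 := by rw [abs_le] at hD; omega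
  rcases this with rfl | rfl | rfl
  · rw [← mul_zero (4 : ℤ), isFundamentalDiscriminant_four_mul] at h
    exact not_squarefree_zero h.2
  · exact h.1 rfl
  · rw [isFundamentalDiscriminant_of_not_dvd (by decide)] at h
    omega

open Classical in
lemma sum_fundDisc (N : ℕ) (g : ℕ → ℂ) :
    ∑ D ∈ fundDisc N, g D.natAbs = ∑ n ∈ Finset.Ioc 0 N,
      ((if IsFundamentalDiscriminant n then 1 else 0) +
      (if IsFundamentalDiscriminant (-n) then 1 else 0) : ℕ) * g n := by
  have hmaps : ∀ D ∈ fundDisc N, D.natAbs ∈ Finset.Ioc 0 N := by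
    intro D hD
    rw [mem_fundDisc] at hD
    have := hD.2.one_lt_abs
    rw [Int.abs_eq_natAbs] at this
    rw [Finset.mem_Ioc]
    exact ⟨by omega, hD.1⟩
  rw [← Finset.sum_fiberwise_of_maps_to hmaps]
  refine Finset.sum_congr rfl fun n hn => ?_
  rw [Finset.mem_Ioc] at hn
  have e : (fundDisc N).filter (fun D => D.natAbs = n) =
      ({(n : ℤ), -(n : ℤ)} : Finset ℤ).filter IsFundamentalDiscriminant := by
    ext D
    simp only [Finset.mem_filter, mem_fundDisc, Finset.mem_insert, Finset.mem_singleton]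
    constructor
    · rintro ⟨⟨h1, h2⟩, h3⟩
      exact ⟨by omega, h2⟩
    · rintro ⟨h1, h2⟩
      exact ⟨⟨by omega, h2⟩, by omega⟩
  have e2 : ((if IsFundamentalDiscriminant n then 1 else 0) +
      (if IsFundamentalDiscriminant (-n) then 1 else 0) : ℕ) =
      (({(n : ℤ), -(n : ℤ)} : Finset ℤ).filter IsFundamentalDiscriminant).card := by
    rw [Finset.card_filter, Finset.sum_pair (by omega)]
  rw [e2, ← e, ← nsmul_eq_mul, ← Finset.sum_const]
  refine Finset.sum_congr rfl fun D hD => ?_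
  rw [(Finset.mem_filter.1 hD).2]

lemma sum_fundDisc_ekTerm (θ : ℝ) {X : ℝ} (hX : 1 ≤ X) :
    (X : ℂ)⁻¹ * ∑ D ∈ fundDisc ⌊X⌋₊, ekTerm θ X D.natAbs =
      ekMean oddSquarefree θ X + ekMean ((4 * ·) '' oddSquarefree) θ X +
        2 * ekMean ((8 * ·) '' oddSquarefree) θ X - (X : ℂ)⁻¹ * ekTerm θ X 1 := by
  classical
  have h1 : (1 : ℕ) ∈ Finset.Ioc 0 ⌊X⌋₊ := by
    rw [Finset.mem_Ioc]; exact ⟨one_pos, Nat.le_floor (by simpa using hX)⟩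
  have e1 : ekTerm θ X 1 = ∑ n ∈ Finset.Ioc 0 ⌊X⌋₊, if n = 1 then ekTerm θ X n else 0 := by
    rw [Finset.sum_ite_eq', if_pos h1]
  rw [eq_sub_iff_add_eq, e1, sum_fundDisc]
  simp only [ekMean]
  rw [mul_left_comm (2 : ℂ), ← mul_add, ← mul_add, ← mul_add, Finset.mul_sum _ _ (2 : ℂ),
    ← Finset.sum_add_distrib, ← Finset.sum_add_distrib, ← Finset.sum_add_distrib]
  congr 1
  refine Finset.sum_congr rfl fun n hn => ?_
  have h := congrArg (fun k : ℕ => (k : ℂ) * ekTerm θ X n)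
    (fundamental_count (Finset.mem_Ioc.1 hn).1)
  simp only [Set.indicator_apply]
  have e3 : ∀ (p : Prop) [Decidable p] (w : ℂ), (if p then w else 0) = ((if p then 1 else 0 : ℕ) : ℂ) * w := by
    intro p _ w; split_ifs <;> simp
  rw [e3 (n = 1), e3 (n ∈ oddSquarefree), e3 (n ∈ (4 * ·) '' oddSquarefree),
    e3 (n ∈ (8 * ·) '' oddSquarefree)]
  simp only [Nat.cast_add, Nat.cast_mul] at h ⊢
  linear_combination h

/-- The Erdős–Kac law for fundamental discriminants on the level of characteristic functions,
normalised by `X`. The constant is `δ + δ / 4 + 2 * (δ / 8)`, with `δ` the density of the odd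
squarefree numbers. -/
lemma tendsto_sum_fundDisc {θ : ℝ → ℝ} {t : ℝ}
    (hθ : Tendsto (fun X => θ X * √(loglog X)) atTop (𝓝 t)) :
    Tendsto (fun X : ℝ => (X : ℂ)⁻¹ * ∑ D ∈ fundDisc ⌊X⌋₊, ekTerm (θ X) X D.natAbs) atTop
      (𝓝 ((3 / 2 * oddSquarefreeDensity : ℝ) * Complex.exp (-(t : ℂ) ^ 2 / 2))) := by
  have h := hasEKDensity_oddSquarefree
  have h1 := h θ t hθ
  have h4 := h.dilate (c := 4) (by norm_num) θ t hθ
  have h8 := (h.dilate (c := 8) (by norm_num) θ t hθ).const_mul 2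
  have h0 : Tendsto (fun X : ℝ => (X : ℂ)⁻¹ * ekTerm (θ X) X 1) atTop (𝓝 0) := by
    rw [tendsto_zero_iff_norm_tendsto_zero]
    refine (tendsto_inv_atTop_zero (𝕜 := ℝ)).congr' ?_
    filter_upwards [eventually_gt_atTop 0] with X hX
    rw [norm_mul, norm_ekTerm, mul_one, norm_inv, Complex.norm_real, Real.norm_of_nonneg hX.le]
  have := ((h1.add h4).add h8).sub h0
  have e : ((3 / 2 * oddSquarefreeDensity : ℝ) : ℂ) * Complex.exp (-(t : ℂ) ^ 2 / 2) =
      oddSquarefreeDensity * Complex.exp (-(t : ℂ) ^ 2 / 2) +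
      ((oddSquarefreeDensity / (4 : ℕ) : ℝ) : ℂ) * Complex.exp (-(t : ℂ) ^ 2 / 2) +
      2 * (((oddSquarefreeDensity / (8 : ℕ) : ℝ) : ℂ) * Complex.exp (-(t : ℂ) ^ 2 / 2)) - 0 := by
    push_cast; ring
  rw [e]
  refine this.congr' ?_
  filter_upwards [eventually_ge_atTop 1] with X hX
  exact (sum_fundDisc_ekTerm _ hX).symm

lemma tendsto_card_fundDisc :
    Tendsto (fun X : ℝ => X⁻¹ * ((fundDisc ⌊X⌋₊).card : ℝ)) atTop
      (𝓝 (3 / 2 * oddSquarefreeDensity)) := by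
  have h := tendsto_sum_fundDisc (θ := fun _ => 0) (t := 0) (by simp)
  have h2 := (Complex.continuous_re.tendsto _).comp h
  have e : ((3 / 2 * oddSquarefreeDensity : ℝ) * Complex.exp (-((0 : ℝ) : ℂ) ^ 2 / 2)).re =
      3 / 2 * oddSquarefreeDensity := by
    simp
  rw [e] at h2
  refine h2.congr fun X => ?_
  simp only [Function.comp, ekTerm, zero_mul, Complex.ofReal_zero, mul_zero, Complex.exp_zero,
    Finset.sum_const, nsmul_eq_mul, mul_one]
  norm_cast

/-- The characteristic function of the normalised `ω` on the fundamental discriminants up to `X`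
tends to that of the standard Gaussian. -/
lemma tendsto_charFun_fundDisc (t : ℝ) :
    Tendsto (fun X : ℝ => ((fundDisc ⌊X⌋₊).card : ℂ)⁻¹ * ∑ D ∈ fundDisc ⌊X⌋₊,
      Complex.exp (t * (((omegaZ D - loglog X) / √(loglog X) : ℝ) : ℂ) * Complex.I)) atTop
      (𝓝 (Complex.exp (-(t : ℂ) ^ 2 / 2))) := by
  have hθ : Tendsto (fun X => t / √(loglog X) * √(loglog X)) atTop (𝓝 t) := by
    refine tendsto_const_nhds.congr' ?_
    filter_upwards [tendsto_loglog.eventually_gt_atTop 0] with X hX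
    have := (Real.sqrt_pos.2 hX).ne'
    field_simp
  have hpos : (3 / 2 * oddSquarefreeDensity : ℝ) ≠ 0 := by
    have := oddSquarefreeDensity_pos; positivity
  have h := (tendsto_sum_fundDisc hθ).div
    ((Complex.continuous_ofReal.tendsto _).comp tendsto_card_fundDisc)
    (by exact_mod_cast hpos)
  rw [mul_div_cancel_left₀ _ (by exact_mod_cast hpos)] at h
  refine h.congr' ?_
  filter_upwards [eventually_gt_atTop 0] with X hX
  have hX' : (X : ℂ) ≠ 0 := by exact_mod_cast hX.ne'
  simp only [Pi.div_apply, Function.comp, Complex.ofReal_mul, Complex.ofReal_inv,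
    Complex.ofReal_natCast]
  rw [mul_div_mul_left _ _ (inv_ne_zero hX'), div_eq_inv_mul]
  congr 1
  refine Finset.sum_congr rfl fun D _ => ?_
  rw [ekTerm, omegaZ]
  congr 1
  push_cast
  ring

/-! ### Convergence of distribution functions -/

/-- The uniform probability measure on the values of `f` on `s`, or the Dirac mass at `0` if `s` is
empty. -/
def empirical {ι : Type*} (s : Finset ι) (f : ι → ℝ) : Measure ℝ :=
  if s.Nonempty then (s.card : ENNReal)⁻¹ • ∑ i ∈ s, Measure.dirac (f i) else Measure.dirac 0

instance isProbabilityMeasure_empirical {ι : Type*} (s : Finset ι) (f : ι → ℝ) :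
    IsProbabilityMeasure (empirical s f) := by
  rw [empirical]
  split_ifs with h
  · constructor
    simp only [Measure.smul_apply, Measure.finsetSum_apply, measure_univ, Finset.sum_const,
      nsmul_eq_mul, mul_one, smul_eq_mul]
    exact ENNReal.inv_mul_cancel (by simpa using h.ne_empty) (ENNReal.natCast_ne_top _)
  · infer_instance

lemma charFun_empirical {ι : Type*} {s : Finset ι} (hs : s.Nonempty) (f : ι → ℝ) (t : ℝ) :
    charFun (empirical s f) t = (s.card : ℂ)⁻¹ * ∑ i ∈ s, Complex.exp (t * f i * Complex.I) := by
  rw [charFun_apply_real, empirical, if_pos hs, integral_smul_measure,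
    integral_finsetSum_measure]
  · simp
  · intro i _
    exact integrable_dirac (by simp)

open Classical in
lemma empirical_Iic {ι : Type*} {s : Finset ι} (hs : s.Nonempty) (f : ι → ℝ) (z : ℝ) :
    (empirical s f).real (Set.Iic z) = ((s.filter (fun i => f i ≤ z)).card : ℝ) / s.card := by
  rw [empirical, if_pos hs, measureReal_def, Measure.smul_apply, Measure.finsetSum_apply,
    Finset.card_filter, div_eq_inv_mul, smul_eq_mul, ENNReal.toReal_mul, ENNReal.toReal_inv,
    ENNReal.toReal_natCast, ENNReal.toReal_sum fun _ _ => measure_ne_top _ _]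
  push_cast
  congr 1
  refine Finset.sum_congr rfl fun i _ => ?_
  rw [Measure.dirac_apply' _ measurableSet_Iic, Set.indicator_apply]
  by_cases h : f i ≤ z <;> simp [h]

lemma gaussCDF_eq (z : ℝ) :
    gaussCDF z = (ProbabilityTheory.gaussianReal 0 1).real (Set.Iic z) := by
  rw [measureReal_def, ProbabilityTheory.gaussianReal_apply_eq_integral _ one_ne_zero,
    ENNReal.toReal_ofReal, gaussCDF, ← integral_const_mul]
  · simp [ProbabilityTheory.gaussianPDFReal]
  · exact integral_nonneg fun x => ProbabilityTheory.gaussianPDFReal_nonneg _ _ _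

/-- Lévy's continuity theorem for empirical measures indexed by a real parameter, in terms of
distribution functions; the Gaussian limit has no atoms, so every `z` is a continuity point. -/
lemma tendsto_empirical_Iic {s : ℝ → Finset ℤ} {f : ℝ → ℤ → ℝ}
    (h : ∀ t : ℝ, Tendsto (fun X => charFun (empirical (s X) (f X)) t) atTop
      (𝓝 (Complex.exp (-(t : ℂ) ^ 2 / 2)))) (z : ℝ) :
    Tendsto (fun X => (empirical (s X) (f X)).real (Set.Iic z)) atTop (𝓝 (gaussCDF z)) := by
  rw [tendsto_iff_seq_tendsto]
  intro u hu
  let ν : ℕ → ProbabilityMeasure ℝ := fun n => ⟨empirical (s (u n)) (f (u n)), inferInstance⟩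
  let γ : ProbabilityMeasure ℝ := ⟨ProbabilityTheory.gaussianReal 0 1, inferInstance⟩
  have hν : Tendsto ν atTop (𝓝 γ) := by
    refine ProbabilityMeasure.tendsto_of_tendsto_charFun fun t => ?_
    have e : charFun (γ : Measure ℝ) t = Complex.exp (-(t : ℂ) ^ 2 / 2) := by
      change charFun (ProbabilityTheory.gaussianReal 0 1) t = _
      rw [ProbabilityTheory.charFun_gaussianReal]
      congr 1
      push_cast
      ring
    rw [e]
    exact (h t).comp hu
  have h2 := ProbabilityMeasure.tendsto_measure_of_null_frontier_of_tendsto' hν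
    (E := Set.Iic z) (by
      rw [frontier_Iic]
      have := ProbabilityTheory.nullSingletonClass_gaussianReal (μ := 0) (v := 1) one_ne_zero
      exact measure_singleton (μ := ProbabilityTheory.gaussianReal 0 1) z)
  rw [gaussCDF_eq]
  exact (ENNReal.tendsto_toReal (measure_ne_top _ _)).comp h2

/-- **Erdős–Kac theorem for fundamental discriminants** (the case `d = 2`).
For every `z ∈ ℝ`, the proportion of fundamental discriminants `D` with `1 < |D| ≤ X`
satisfying `ω(D) - log log X ≤ z √(log log X)` tends to the standard Gaussian CDF at `z`;
that is, the number of ramified primes in quadratic fields of absolute discriminant at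
most `X` is normally distributed with mean and variance `log log X`. -/
theorem erdosKac_fundamental_discriminants (z : ℝ) :
    Tendsto (fun X : ℝ =>
      (Nat.card {D : ℤ // IsFundamentalDiscriminant D ∧ 1 < |D| ∧ (|D| : ℝ) ≤ X ∧
          (omegaZ D : ℝ) - Real.log (Real.log X) ≤
            z * Real.sqrt (Real.log (Real.log X))} : ℝ) /
      (Nat.card {D : ℤ // IsFundamentalDiscriminant D ∧ 1 < |D| ∧ (|D| : ℝ) ≤ X} : ℝ))
      atTop (nhds (gaussCDF z)) := by
  classical
  have hne : ∀ᶠ X : ℝ in atTop, (fundDisc ⌊X⌋₊).Nonempty := by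
    have hpos : 0 < 3 / 2 * oddSquarefreeDensity := by
      have := oddSquarefreeDensity_pos; positivity
    filter_upwards [tendsto_card_fundDisc.eventually (lt_mem_nhds hpos)] with X hX
    by_contra h
    rw [Finset.not_nonempty_iff_eq_empty] at h
    simp [h] at hX
  have hcf : ∀ t : ℝ, Tendsto (fun X => charFun (empirical (fundDisc ⌊X⌋₊)
      (fun D => (omegaZ D - loglog X) / √(loglog X))) t) atTop
      (𝓝 (Complex.exp (-(t : ℂ) ^ 2 / 2))) := by
    intro t
    refine (tendsto_charFun_fundDisc t).congr' ?_
    filter_upwards [hne] with X hX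
    rw [charFun_empirical hX]
  refine (tendsto_empirical_Iic hcf z).congr' ?_
  filter_upwards [hne, tendsto_loglog.eventually_gt_atTop 0, eventually_ge_atTop 0]
    with X hX hL hX0
  have hmem : ∀ D : ℤ, D ∈ fundDisc ⌊X⌋₊ ↔
      IsFundamentalDiscriminant D ∧ 1 < |D| ∧ (|D| : ℝ) ≤ X := by
    intro D
    rw [mem_fundDisc, Nat.le_floor_iff hX0, Nat.cast_natAbs, Int.cast_abs]
    exact ⟨fun h => ⟨h.2, h.2.one_lt_abs, h.1⟩, fun h => ⟨h.2.2, h.1⟩⟩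
  rw [empirical_Iic hX]
  congr 2
  · rw [← Nat.card_eq_finsetCard]
    refine Nat.card_congr (Equiv.subtypeEquivRight fun D => ?_)
    rw [Finset.mem_filter, hmem, div_le_iff₀ (Real.sqrt_pos.2 hL), loglog]
    tauto
  · rw [← Nat.card_eq_finsetCard]
    exact Nat.card_congr (Equiv.subtypeEquivRight hmem)
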